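/- Let g(x) = ∏_{i=1}^{r}(x−α_i)^{n_i} and f(y) = ∏_{j=1}^{s}(y−β_j)^{m_j} be complex polynomials of the same degree d, with α₁,…,α_r pairwise distinct complex numbers, β₁,…,β_s pairwise distinct complex numbers, and all n_i, m_j positive. Assume that every singular point of the affine curve B = {(x,y) ∈ ℂ² : g(x) = f(y)} lies on {g = 0}; that is, whenever g(x) = f(y), g′(x) = 0 and f′(y) = 0, one has g(x) = 0. Let n = gcd(n₁,…,n_r) and m = gcd(m₁,…,m_s). Then the fundamental group of the complement ℂ² ∖ B = {(x,y) ∈ ℂ² : g(x) ≠ f(y)} (at any base point) is isomorphic to G_{m,n}. -/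

import Mathlib

/-!
Let `n` and `m` be the gcds of the multiplicities, so that `g` is the `n`-th power and `f` the
`m`-th power of a polynomial. The complement of `g x = f y` is the union of the open set where
`f ≠ 0` and `g / f` avoids the ray `[1, ∞)` and of the open set obtained by exchanging `g` and `f`.
Over each of them take the cover whose points carry an argument of the `m`-th root of `f`,
respectively of the `n`-th root of `g`; because the roots have coprime multiplicities, these two
sheets are connected.

A homeomorphism of the target plane does not change the complement. The condition on singular
points makes the nonzero critical values of `g` and `f` disjoint, and a twist of the plane then
moves them to different rays, where a positively homogeneous gauge separates them. Radial rescaling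
of the values can now be lifted to `x` and `y`; it deforms both sheets, showing that they are
null-homotopic in the complement. The same argument shows that the points of the fibre product of
the sheets at which the arguments of `g x` and `f y` differ by between `l` and `l + 1` turns form
a path-connected piece, for each integer `l`.

By van Kampen, in the form of descent along the two sheets, the fundamental group is generated by
the loops `Q l` which go out along one sheet and return along the other, crossing over at level `l`.
The only relations are `Q 0 = 1` and those coming from full turns on either sheet,
`Q (l + m) = Q m * Q l` and `Q (l + n) = Q l * Q n`. With `Q l = g₁ ⋯ gₗ` these are the relations of
`G_{m,n}`.
-/

namespace CurveComplement

open Set Filter Topology unitInterval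

/-! ### Descent of locally constant cocycles -/

section Descent

variable {X Y Γ : Type*} [TopologicalSpace X] [TopologicalSpace Y] [Group Γ] {π : Y → X}

/-- A continuous section of `π : Y → X` over an open set; the values of `toFun` off `base` are
junk. -/
structure LocalSection (π : Y → X) where
  base : Set X
  isOpen_base : IsOpen base
  toFun : X → Y
  continuousOn : ContinuousOn toFun base
  proj_apply : ∀ x ∈ base, π (toFun x) = x

/-- `π` has a local section through the fibre over every point of `X`.  Such maps play the role of
open covers: an open cover `(Uᵢ)` is the map `∐ Uᵢ → X`. -/
def IsLocallySplit (π : Y → X) : Prop :=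
  ∀ x, ∃ s : LocalSection π, x ∈ s.base

theorem IsLocallySplit.surjective (hπ : IsLocallySplit π) : Function.Surjective π := fun x =>
  let ⟨s, hs⟩ := hπ x
  ⟨s.toFun x, s.proj_apply x hs⟩

theorem IsLocallySplit.path_induction (hπ : IsLocallySplit π)
    {P : ∀ ⦃x y : X⦄, Path.Homotopic.Quotient x y → Prop}
    (lift : ∀ ⦃x y⦄ (γ : Path x y) (δ : C(I, Y)), (∀ t, π (δ t) = γ t) → P (.mk γ))
    (trans : ∀ ⦃x y z⦄ (a : Path.Homotopic.Quotient x y) (b : Path.Homotopic.Quotient y z),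
      P a → P b → P (a.trans b)) ⦃x y : X⦄ (a : Path.Homotopic.Quotient x y) : P a := by
  obtain ⟨γ, rfl⟩ := Path.Homotopic.Quotient.mk_surjective a
  choose s hs using fun t => hπ (γ t)
  obtain ⟨τ, τ_zero, τ_mono, ⟨N, τ_one⟩, τ_sub⟩ :=
    exists_monotone_Icc_subset_open_cover_unitInterval
      (fun t => (s t).isOpen_base.preimage γ.continuous) fun t _ => mem_iUnion.2 ⟨t, hs t⟩
  have piece (k : ℕ) : P (.mk (γ.subpath (τ k) (τ (k + 1)))) := by
    obtain ⟨i, hi⟩ := τ_sub k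
    have mem (t : I) : γ.subpath (τ k) (τ (k + 1)) t ∈ (s i).base := by
      obtain ⟨r, hr, hrt⟩ : γ.subpath (τ k) (τ (k + 1)) t ∈ γ '' Icc (τ k) (τ (k + 1)) := by
        rw [← Path.range_subpath_of_le γ _ _ (τ_mono k.le_succ)]
        exact mem_range_self t
      exact hrt ▸ hi hr
    exact lift _ ⟨_, (s i).continuousOn.comp_continuous (Path.continuous _) mem⟩
      fun t => (s i).proj_apply _ (mem t)
  have initial (k : ℕ) : P (.mk (γ.subpath (τ 0) (τ k))) := by
    induction k with
    | zero =>
      obtain ⟨p, hp⟩ := hπ.surjective (γ (τ 0))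
      exact lift _ (.const I p) fun t => by simp [hp]
    | succ k ih =>
      have split := trans _ _ ih (piece k)
      rwa [← Path.Homotopic.Quotient.mk_trans,
        Path.Homotopic.Quotient.eq.2 ⟨Path.Homotopy.subpathTransSubpath γ _ _ _⟩] at split
  have uncast : ∀ {x y x' y' : X} (δ : Path x y) (hx : x' = x) (hy : y' = y),
      P (.mk (δ.cast hx hy)) → P (.mk δ) := by
    rintro x y _ _ δ rfl rfl h
    exact h
  refine uncast γ γ.source γ.target ?_
  have whole := initial N
  rw [τ_zero, τ_one N le_rfl] at whole
  rwa [Path.subpath_zero_one] at whole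

/-- A locally constant `Γ`-valued 1-cocycle on the fibre product `Y ×_X Y`; values `c p q` with
`π p ≠ π q` are junk. -/
structure IsCocycle (π : Y → X) (c : Y → Y → Γ) : Prop where
  mul : ∀ ⦃p q r⦄, π p = π q → π q = π r → c p q * c q r = c p r
  eventually_eq : ∀ ⦃p q⦄, π p = π q →
    ∀ᶠ r : Y × Y in 𝓝 (p, q), π r.1 = π r.2 → c r.1 r.2 = c p q

namespace IsCocycle

variable {c : Y → Y → Γ} (hc : IsCocycle π c)
include hc

omit [TopologicalSpace X] in
theorem self (p : Y) : c p p = 1 := mul_eq_left.1 (hc.mul (p := p) rfl rfl)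

omit [TopologicalSpace X] in
theorem eventually_eq_comp {Z : Type*} [TopologicalSpace Z] {f g : Z → Y} {z : Z}
    (hf : ContinuousAt f z) (hg : ContinuousAt g z) (h : ∀ᶠ z' in 𝓝 z, π (f z') = π (g z')) :
    ∀ᶠ z' in 𝓝 z, c (f z') (g z') = c (f z) (g z) := by
  filter_upwards [h, (hf.prodMk hg).eventually (hc.eventually_eq h.self_of_nhds)] with z' hz hz'
  exact hz' hz

end IsCocycle

/-- The bundle with discrete fibre `Γ` glued along a cocycle by left multiplication. -/
noncomputable def IsCocycle.bundleCore [TopologicalSpace Γ] [DiscreteTopology Γ] {c : Y → Y → Γ}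
    (hc : IsCocycle π c) (hπ : IsLocallySplit π) : FiberBundleCore (LocalSection π) X Γ where
  baseSet s := s.base
  isOpen_baseSet s := s.isOpen_base
  indexAt x := (hπ x).choose
  mem_baseSet_at x := (hπ x).choose_spec
  coordChange s t x g := c (t.toFun x) (s.toFun x) * g
  coordChange_self s x _ g := by rw [hc.self, one_mul]
  continuousOn_coordChange s t := by
    rintro ⟨x, g⟩ ⟨⟨hs : x ∈ s.base, ht : x ∈ t.base⟩, -⟩
    have same_fibre : ∀ᶠ y in 𝓝 x, π (t.toFun y) = π (s.toFun y) := by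
      filter_upwards [s.isOpen_base.mem_nhds hs, t.isOpen_base.mem_nhds ht] with y hys hyt
      rw [s.proj_apply y hys, t.proj_apply y hyt]
    have const := (hc.eventually_eq_comp (t.continuousOn.continuousAt (t.isOpen_base.mem_nhds ht))
      (s.continuousOn.continuousAt (s.isOpen_base.mem_nhds hs)) same_fibre).prod_nhds
      (show ∀ᶠ h in 𝓝 g, h = g by simp)
    refine ((continuousAt_const (y := c (t.toFun x) (s.toFun x) * g)).congr ?_).continuousWithinAt
    filter_upwards [const] with q hq
    rw [hq.1, hq.2]
  coordChange_comp := by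
    rintro s t r x ⟨⟨hs, ht⟩, hr⟩ g
    rw [← mul_assoc, hc.mul] <;> simp only [s.proj_apply x hs, t.proj_apply x ht, r.proj_apply x hr]

namespace IsCocycle

variable [TopologicalSpace Γ] [DiscreteTopology Γ] {c : Y → Y → Γ} (hc : IsCocycle π c)
  (hπ : IsLocallySplit π)

/-- The fibre coordinate of the point of the glued bundle which `p : Y` trivializes. -/
noncomputable def fibreCoord (p : Y) : Γ :=
  c (((hc.bundleCore hπ).indexAt (π p)).toFun (π p)) p

theorem proj_indexAt_apply (x : X) : π (((hc.bundleCore hπ).indexAt x).toFun x) = x :=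
  LocalSection.proj_apply _ x ((hc.bundleCore hπ).mem_baseSet_at x)

theorem fibreCoord_eq_mul {p q : Y} (h : π p = π q) :
    hc.fibreCoord hπ q = hc.fibreCoord hπ p * c p q := by
  rw [fibreCoord, fibreCoord, ← h, hc.mul (hc.proj_indexAt_apply hπ _) h]

theorem continuous_mk_fibreCoord {Z : Type*} [TopologicalSpace Z] {δ : Z → Y} (hδ : Continuous δ)
    (hπδ : Continuous fun z => π (δ z)) (g : Γ) :
    Continuous fun z =>
      (⟨π (δ z), hc.fibreCoord hπ (δ z) * g⟩ : (hc.bundleCore hπ).TotalSpace) := by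
  set B := hc.bundleCore hπ
  refine continuous_iff_continuousAt.2 fun z => ?_
  set s := B.indexAt (π (δ z))
  have base_mem : (fun z' => π (δ z')) ⁻¹' s.base ∈ 𝓝 z :=
    hπδ.continuousAt.preimage_mem_nhds (s.isOpen_base.mem_nhds (B.mem_baseSet_at _))
  refine ((B.localTriv s).toOpenPartialHomeomorph.continuousAt_iff_continuousAt_comp_left
    base_mem).2 (hπδ.continuousAt.prodMk ?_)
  have section_cont : ContinuousAt (fun z' => s.toFun (π (δ z'))) z :=
    (s.continuousOn.continuousAt (s.isOpen_base.mem_nhds (B.mem_baseSet_at _))).comp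
      (f := fun z' => π (δ z')) hπδ.continuousAt
  have const := hc.eventually_eq_comp section_cont hδ.continuousAt <| by
    filter_upwards [base_mem] with z' hz' using s.proj_apply _ hz'
  refine (continuousAt_const (y := c (s.toFun (π (δ z))) (δ z) * g)).congr ?_
  filter_upwards [const, base_mem] with z' hz' hmem
  have split := hc.mul ((s.proj_apply _ hmem).trans (hc.proj_indexAt_apply hπ (π (δ z'))).symm)
    (hc.proj_indexAt_apply hπ _)
  rw [← hz', ← split, mul_assoc]
  rfl

end IsCocycle

/-- A trivialization `u` of the cocycle on each fibre can be chosen so that lifting paths to the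
glued covering becomes comparison of the values of `u` at the end points. -/
theorem IsCocycle.exists_transport {c : Y → Y → Γ} (hc : IsCocycle π c) (hπ : IsLocallySplit π) :
    ∃ (T : ∀ ⦃x y : X⦄, Path.Homotopic.Quotient x y → Γ) (u : Y → Γ),
      (∀ ⦃x y z⦄ (a : Path.Homotopic.Quotient x y) (b : Path.Homotopic.Quotient y z),
        T (a.trans b) = T b * T a) ∧
      (∀ p q, π p = π q → u q = u p * c p q) ∧
      ∀ ⦃x y⦄ (γ : Path x y) (δ : C(I, Y)), (∀ t, π (δ t) = γ t) →
        T (.mk γ) = u (δ 1) * (u (δ 0))⁻¹ := by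
  let _ : TopologicalSpace Γ := ⊥
  have _ : DiscreteTopology Γ := ⟨rfl⟩
  let B := hc.bundleCore hπ
  let u := hc.fibreCoord hπ
  have cov : IsCoveringMap (Bundle.TotalSpace.proj : B.TotalSpace → X) := FiberBundle.isCoveringMap
  let point (x : X) (g : Γ) : Bundle.TotalSpace.proj (F := Γ) (E := B.Fiber) ⁻¹' {x} :=
    ⟨⟨x, g⟩, rfl⟩
  have point_injective (x : X) : Function.Injective (point x) := fun g h e => by
    cases e
    rfl
  have point_surjective (x : X) : Function.Surjective (point x) := by
    rintro ⟨⟨_, g⟩, rfl⟩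
    exact ⟨g, rfl⟩
  choose M hM using fun x y (a : Path.Homotopic.Quotient x y) g =>
    point_surjective y (cov.monodromy a (point x g))
  have M_trans {x y z} (a : Path.Homotopic.Quotient x y) (b : Path.Homotopic.Quotient y z) (g : Γ) :
      M x z (a.trans b) g = M y z b (M x y a g) :=
    point_injective z (by rw [hM, hM, hM, cov.monodromy_trans_apply])
  have M_lift {x y} (γ : Path x y) (δ : C(I, Y)) (hδ : ∀ t, π (δ t) = γ t) (g : Γ) :
      M x y (.mk γ) g = u (δ 1) * (u (δ 0))⁻¹ * g := by
    obtain rfl : π (δ 0) = x := by simp [hδ]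
    obtain rfl : π (δ 1) = y := by simp [hδ]
    have lift_cont := hc.continuous_mk_fibreCoord hπ δ.continuous
      ((funext hδ : (fun t => π (δ t)) = γ) ▸ γ.continuous) ((u (δ 0))⁻¹ * g)
    let lift : Path (⟨π (δ 0), g⟩ : B.TotalSpace) ⟨π (δ 1), u (δ 1) * (u (δ 0))⁻¹ * g⟩ :=
      ⟨⟨_, lift_cont⟩, by simp [u], by simp [u, mul_assoc]⟩
    refine point_injective _ ((hM _ _ _ _).trans (cov.monodromy_eq_of_map_eq (.mk lift) ?_))
    exact congrArg Path.Homotopic.Quotient.mk (Path.ext (funext hδ))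
  have M_eq_mul {x y} (a : Path.Homotopic.Quotient x y) : ∀ g, M x y a g = M x y a 1 * g := by
    refine hπ.path_induction (P := fun x y a => ∀ g, M x y a g = M x y a 1 * g)
      (fun x y γ δ hδ g => ?_) (fun x y z a b ha hb g => ?_) a
    · rw [M_lift γ δ hδ, M_lift γ δ hδ, mul_one]
    · rw [M_trans, M_trans, ha, hb, ← mul_assoc, ← hb]
  refine ⟨fun x y a => M x y a 1, u, fun x y z a b => ?_, fun p q => hc.fibreCoord_eq_mul hπ,
    fun x y γ δ hδ => ?_⟩
  · exact (M_trans a b 1).trans (M_eq_mul b _)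
  · exact (M_lift γ δ hδ 1).trans (mul_one _)

end Descent

section VanKampen

variable {X Y Γ : Type*} [TopologicalSpace X] [TopologicalSpace Y] [Group Γ] {π : Y → X} {w : X}

/-- Points of the fibre over the base point `w`, one in each path component of `Y`. -/
structure Roots (π : Y → X) (w : X) where
  root : Y → Y
  proj_root : ∀ p, π (root p) = w
  joined_root : ∀ p, Joined (root p) p
  root_eq : ∀ ⦃p q⦄, Joined p q → root p = root q

/-- Paths in `Y` with the same end points have homotopic images under `π`. -/
def ParallelPathsHomotopic (π : Y → X) : Prop :=
  ∀ ⦃x y⦄ (γ γ' : Path x y) (δ δ' : C(I, Y)), (∀ t, π (δ t) = γ t) → (∀ t, π (δ' t) = γ' t) →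
    δ 0 = δ' 0 → δ 1 = δ' 1 → γ.Homotopic γ'

section PathClasses

open Path.Homotopic.Quotient

variable {x y z : X}

theorem symm_trans_pathClass (a : Path.Homotopic.Quotient x y) (b : Path.Homotopic.Quotient y z) :
    (a.trans b).symm = b.symm.trans a.symm := by
  obtain ⟨γ, rfl⟩ := mk_surjective a
  obtain ⟨δ, rfl⟩ := mk_surjective b
  rw [← mk_trans, ← mk_symm, Path.trans_symm, mk_trans, mk_symm, mk_symm]

theorem trans_symm_cancel_left (a : Path.Homotopic.Quotient x y)
    (b : Path.Homotopic.Quotient x z) : a.trans (a.symm.trans b) = b := by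
  rw [← Path.Homotopic.Quotient.trans_assoc, trans_symm, refl_trans]

theorem symm_trans_cancel_left (a : Path.Homotopic.Quotient x y)
    (b : Path.Homotopic.Quotient y z) : a.symm.trans (a.trans b) = b := by
  rw [← Path.Homotopic.Quotient.trans_assoc, symm_trans, refl_trans]

end PathClasses

namespace Roots

open Path.Homotopic.Quotient (trans_assoc trans_symm)

variable (R : Roots π w) (hπ : Continuous π)

/-- The class of a path from the base point to `x = π p` which lifts to a path from the root to
`p`. -/
noncomputable def tether (p : Y) {x : X} (h : π p = x) : Path.Homotopic.Quotient w x :=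
  .mk (((R.joined_root p).somePath.map hπ).cast (R.proj_root p).symm h.symm)

/-- The loop which goes out along the tether of `q` and returns along the tether of `p`. -/
noncomputable def loop {p q : Y} {x : X} (hp : π p = x) (hq : π q = x) : FundamentalGroup X w :=
  (R.tether hπ q hq).trans (R.tether hπ p hp).symm

variable {hπ} {x y : X} {p q r : Y}

theorem tether_trans_mk (hpar : ParallelPathsHomotopic π) (γ : Path x y) {δ : C(I, Y)}
    (hδ : ∀ t, π (δ t) = γ t) (h₀ : π (δ 0) = x) (h₁ : π (δ 1) = y) :
    (R.tether hπ (δ 0) h₀).trans (.mk γ) = R.tether hπ (δ 1) h₁ := by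
  let δ' : Path (δ 0) (δ 1) := ⟨δ, rfl, rfl⟩
  refine Path.Homotopic.Quotient.eq.2 (hpar _ _ ((R.joined_root (δ 0)).somePath.trans δ')
    (R.joined_root (δ 1)).somePath (fun t => ?_) (fun _ => rfl) ?_ ?_)
  · simp only [ContinuousMap.coe_coe, Path.trans_apply, Path.cast_coe, Path.map_coe,
      Function.comp_apply]
    split_ifs
    exacts [rfl, hδ _]
  · simpa using R.root_eq ⟨δ'⟩
  · simp

theorem tether_root (hpar : ParallelPathsHomotopic π) (p : Y) :
    R.tether hπ (R.root p) (R.proj_root p) = .refl w :=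
  Path.Homotopic.Quotient.eq.2 <| hpar _ _ (R.joined_root (R.root p)).somePath
    (.const I (R.root p)) (fun _ => rfl) (fun _ => R.proj_root p)
    (by simpa using R.root_eq (R.joined_root p)) (by simp)

theorem loop_mul (hp : π p = x) (hq : π q = x) (hr : π r = x) :
    R.loop hπ hp hq * R.loop hπ hq hr = R.loop hπ hp hr := by
  change ((R.tether hπ r hr).trans (R.tether hπ q hq).symm).trans
    ((R.tether hπ q hq).trans (R.tether hπ p hp).symm) = _
  rw [trans_assoc, symm_trans_cancel_left]
  rfl

theorem loop_self (hp : π p = x) : R.loop hπ hp hp = 1 :=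
  trans_symm _

theorem loop_inv (hp : π p = x) (hq : π q = x) : (R.loop hπ hp hq)⁻¹ = R.loop hπ hq hp :=
  inv_eq_of_mul_eq_one_right ((R.loop_mul hp hq hp).trans (R.loop_self hp))

theorem loop_root (hpar : ParallelPathsHomotopic π) (p q : Y) :
    R.loop hπ (R.proj_root p) (R.proj_root q) = 1 := by
  rw [loop, R.tether_root hpar, R.tether_root hpar, trans_symm]
  rfl

theorem loop_eq_of_lifts (hpar : ParallelPathsHomotopic π) (γ : Path x y) {δ ε : C(I, Y)}
    (hδ : ∀ t, π (δ t) = γ t) (hε : ∀ t, π (ε t) = γ t) (hδ₀ : π (δ 0) = x) (hε₀ : π (ε 0) = x)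
    (hδ₁ : π (δ 1) = y) (hε₁ : π (ε 1) = y) :
    R.loop hπ hδ₀ hε₀ = R.loop hπ hδ₁ hε₁ := by
  rw [loop, loop, ← R.tether_trans_mk hpar γ hδ hδ₀ hδ₁, ← R.tether_trans_mk hpar γ hε hε₀ hε₁,
    symm_trans_pathClass, trans_assoc, trans_symm_cancel_left]

section Bijective

variable {c : Y → Y → Γ} (s : Γ →* FundamentalGroup X w)
  (hs : ∀ ⦃p q : Y⦄ ⦃x : X⦄ (hp : π p = x) (hq : π q = x), s (c p q) = R.loop hπ hp hq)
include hs

theorem surjective_of_loop (hsplit : IsLocallySplit π) (hpar : ParallelPathsHomotopic π) :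
    Function.Surjective s := by
  have loop_mem {p q : Y} {x : X} (hp : π p = x) (hq : π q = x) :
      (R.tether hπ q hq).trans (R.tether hπ p hp).symm ∈ s.range := ⟨c p q, hs hp hq⟩
  have closed_mem ⦃x y : X⦄ (a : Path.Homotopic.Quotient x y) :
      ∀ p q (hp : π p = x) (hq : π q = y),
        (R.tether hπ p hp).trans (a.trans (R.tether hπ q hq).symm) ∈ s.range := by
    refine hsplit.path_induction (P := fun x y a => ∀ p q (hp : π p = x) (hq : π q = y),
      (R.tether hπ p hp).trans (a.trans (R.tether hπ q hq).symm) ∈ s.range)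
      (fun x y γ δ hδ p q hp hq => ?_) (fun x y z a b ha hb p q hp hq => ?_) a
    · have hδ₀ : π (δ 0) = x := (hδ 0).trans γ.source
      have mem := s.range.mul_mem (loop_mem hq ((hδ 1).trans γ.target)) (loop_mem hδ₀ hp)
      rwa [← R.tether_trans_mk hpar γ hδ hδ₀, FundamentalGroup.mul_def, trans_assoc, trans_assoc,
        symm_trans_cancel_left] at mem
    · obtain ⟨r, hr⟩ := hsplit.surjective y
      have mem := s.range.mul_mem (hb r q hr hq) (ha p r hp hr)
      rwa [FundamentalGroup.mul_def, trans_assoc, trans_assoc, symm_trans_cancel_left,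
        ← trans_assoc a] at mem
  intro a
  obtain ⟨p, -⟩ := hsplit.surjective w
  have mem := closed_mem a (R.root p) (R.root p) (R.proj_root p) (R.proj_root p)
  rwa [R.tether_root hpar, Path.Homotopic.Quotient.refl_trans, ← FundamentalGroup.one_def,
    ← FundamentalGroup.inv_def, inv_one, FundamentalGroup.one_def,
    Path.Homotopic.Quotient.trans_refl] at mem

theorem injective_of_loop (hc : IsCocycle π c) (hsplit : IsLocallySplit π)
    (hroot : ∀ p q, c (R.root p) (R.root q) = 1)
    (hgen : Subgroup.closure {g | ∃ p q, π p = π q ∧ c p q = g} = ⊤) :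
    Function.Injective s := by
  obtain ⟨T, u, T_trans, u_eq, T_lift⟩ := hc.exists_transport hsplit
  obtain ⟨p₀, -⟩ := hsplit.surjective w
  let τ : FundamentalGroup X w →* Γ := .mk' (T (x := w) (y := w)) fun a b => T_trans b a
  have T_refl : T (.refl w) = 1 := τ.map_one
  have u_root (p : Y) : u (R.root p) = u (R.root p₀) := by
    rw [u_eq (R.root p₀) (R.root p) (by rw [R.proj_root, R.proj_root]), hroot, mul_one]
  have T_tether (p : Y) {x : X} (hp : π p = x) :
      T (R.tether hπ p hp) = u p * (u (R.root p₀))⁻¹ := by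
    rw [tether, T_lift _ (R.joined_root p).somePath fun t => rfl]
    simp [u_root]
  have τ_loop {p q : Y} {x : X} (hp : π p = x) (hq : π q = x) :
      τ (R.loop hπ hp hq) = u (R.root p₀) * c p q * (u (R.root p₀))⁻¹ := by
    have T_symm : T (R.tether hπ p hp).symm * T (R.tether hπ p hp) = 1 := by
      rw [← T_trans, trans_symm, T_refl]
    change T ((R.tether hπ q hq).trans (R.tether hπ p hp).symm) = _
    rw [T_trans, eq_inv_of_mul_eq_one_left T_symm, T_tether, T_tether, u_eq p q (hp.trans hq.symm)]
    group
  have conj : τ.comp s = (MulAut.conj (u (R.root p₀))).toMonoidHom := by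
    refine MonoidHom.eq_of_eqOn_dense hgen ?_
    rintro _ ⟨p, q, h, rfl⟩
    exact (congrArg τ (hs h rfl)).trans (τ_loop h rfl)
  have : Function.Injective (τ ∘ s) := by
    rw [← MonoidHom.coe_comp, conj]
    exact (MulAut.conj _).injective
  exact this.of_comp

end Bijective

end Roots

end VanKampen

/-! ### The group `G_{m,n}` and biperiodic sequences -/

section Biperiodic

variable {G H : Type*} [Group G] [Group H]

/-- The permutation of `ℤ × G` whose powers multiply out the sequence `g`. -/
def stepPerm (g : ℤ → G) : Equiv.Perm (ℤ × G) where
  toFun p := (p.1 + 1, p.2 * g (p.1 + 1))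
  invFun p := (p.1 - 1, p.2 * (g p.1)⁻¹)
  left_inv p := by simp
  right_inv p := by simp

theorem stepPerm_zpow_fst (g : ℤ → G) (l : ℤ) : ((stepPerm g ^ l) (0, 1)).1 = l := by
  induction l with
  | zero => rfl
  | succ i ih =>
    rw [add_comm, zpow_one_add, Equiv.Perm.mul_apply, add_comm]
    exact congrArg (· + 1) ih
  | pred i ih =>
    rw [← sub_add_cancel (-(i : ℤ)) 1, add_comm, zpow_one_add, Equiv.Perm.mul_apply, add_comm] at ih
    exact add_right_cancel (b := 1) ih

/-- The product `g 1 * ⋯ * g l`, extended to negative `l` by `partialProd_add_one`. -/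
def partialProd (g : ℤ → G) (l : ℤ) : G := ((stepPerm g ^ l) (0, 1)).2

theorem partialProd_zero (g : ℤ → G) : partialProd g 0 = 1 := rfl

theorem partialProd_add_one (g : ℤ → G) (l : ℤ) :
    partialProd g (l + 1) = partialProd g l * g (l + 1) := by
  nth_rw 3 [← stepPerm_zpow_fst g l]
  rw [partialProd, add_comm, zpow_one_add, Equiv.Perm.mul_apply]
  rfl

theorem eq_partialProd {g P : ℤ → G} (zero : P 0 = 1) (add_one : ∀ l, P (l + 1) = P l * g (l + 1)) :
    P = partialProd g := by
  funext l
  induction l with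
  | zero => exact zero
  | succ i ih => rw [add_one, partialProd_add_one, ih]
  | pred i ih =>
    rw [← sub_add_cancel (-(i : ℤ)) 1, add_one, partialProd_add_one] at ih
    exact mul_right_cancel ih

theorem map_partialProd (s : G →* H) (g : ℤ → G) (l : ℤ) :
    s (partialProd g l) = partialProd (fun k => s (g k)) l :=
  congrFun (eq_partialProd (P := fun l => s (partialProd g l)) s.map_one
    fun l => by rw [partialProd_add_one, map_mul]) l

theorem partialProd_natCast (g : ℤ → G) (n : ℕ) :
    partialProd g n = ((List.range n).map fun i => g (i + 1 : ℕ)).prod := by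
  induction n with
  | zero => rfl
  | succ n ih =>
    rw [Nat.cast_succ, partialProd_add_one, ih, List.range_succ, List.map_append, List.prod_append]
    simp

/-- A sequence whose translates by `m` and `n` are its multiples by its `m`-th term on the left and
by its `n`-th term on the right. -/
structure IsBiperiodic (m n : ℕ) (P : ℤ → G) : Prop where
  zero : P 0 = 1
  add_left_period : ∀ l, P (l + m) = P m * P l
  add_right_period : ∀ l, P (l + n) = P l * P n

namespace IsBiperiodic

variable {m n : ℕ} {P : ℤ → G} (hP : IsBiperiodic m n P)
include hP

theorem add_mul_left_period (l N : ℤ) : P (l + N * m) = P m ^ N * P l := by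
  induction N with
  | zero => simp
  | succ i ih =>
    rw [add_one_mul, ← add_assoc, hP.add_left_period, ih, ← mul_assoc, mul_self_zpow]
  | pred i ih =>
    rw [← sub_add_cancel (-(i : ℤ)) 1, add_one_mul, ← add_assoc, hP.add_left_period,
      ← mul_self_zpow, mul_assoc] at ih
    exact mul_left_cancel ih

theorem add_mul_right_period (l N : ℤ) : P (l + N * n) = P l * P n ^ N := by
  induction N with
  | zero => simp
  | succ i ih => rw [add_one_mul, ← add_assoc, hP.add_right_period, ih, mul_assoc, zpow_add_one]
  | pred i ih =>
    rw [← sub_add_cancel (-(i : ℤ)) 1, add_one_mul, ← add_assoc, hP.add_right_period,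
      zpow_add_one, ← mul_assoc] at ih
    exact mul_right_cancel ih

end IsBiperiodic

theorem isBiperiodic_partialProd {m n : ℕ} {g : ℤ → G} (periodic : ∀ k, g (k + m) = g k)
    (conj : ∀ k, g k = partialProd g n * g (k + n) * (partialProd g n)⁻¹) :
    IsBiperiodic m n (partialProd g) where
  zero := partialProd_zero g
  add_left_period l := by
    have := congrFun (eq_partialProd (g := g)
      (P := fun l => (partialProd g m)⁻¹ * partialProd g (l + m)) (by simp) fun l => by
        rw [add_right_comm, partialProd_add_one, add_right_comm, periodic, mul_assoc]) l
    rw [← this, mul_inv_cancel_left]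
  add_right_period l := by
    have := congrFun (eq_partialProd (g := g)
      (P := fun l => partialProd g (l + n) * (partialProd g n)⁻¹) (by simp) fun l => by
        rw [add_right_comm, partialProd_add_one, conj (l + 1), add_right_comm]
        group) l
    rw [← this, inv_mul_cancel_right]

theorem IsBiperiodic.exists_partialProd_eq {m n : ℕ} {P : ℤ → G} (hP : IsBiperiodic m n P) :
    ∃ g : ℤ → G, Function.Periodic g m ∧ (∀ k, g k = P n * g (k + n) * (P n)⁻¹) ∧
      P = partialProd g := by
  refine ⟨fun k => (P (k - 1))⁻¹ * P k, fun k => ?_, fun k => ?_, eq_partialProd hP.zero ?_⟩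
  · simp only [add_sub_right_comm, hP.add_left_period]
    group
  · simp only [add_sub_right_comm, hP.add_right_period]
    group
  · intro l
    simp

/-- The relators `gₖ⁻¹ (g₁ ⋯ gₙ) gₖ₊ₙ (g₁ ⋯ gₙ)⁻¹` of the group `G_{m,n}`. -/
def relators (m n : ℕ) : Set (FreeGroup (ZMod m)) :=
  {w | ∃ k : ZMod m,
    w = (FreeGroup.of k)⁻¹ *
      (((List.range n).map (fun i => FreeGroup.of ((i + 1 : ℕ) : ZMod m))).prod) *
      FreeGroup.of (k + (n : ZMod m)) *
      (((List.range n).map (fun i => FreeGroup.of ((i + 1 : ℕ) : ZMod m))).prod)⁻¹}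

/-- The products `g₁ ⋯ gₗ` in `G_{m,n}`. -/
def universalSeq (m n : ℕ) : ℤ → PresentedGroup (relators m n) :=
  partialProd fun k => .of k

theorem isBiperiodic_universalSeq (m n : ℕ) : IsBiperiodic m n (universalSeq m n) := by
  refine isBiperiodic_partialProd (fun k => by simp) fun k => ?_
  have relation := PresentedGroup.one_of_mem (rels := relators m n) ⟨(k : ZMod m), rfl⟩
  simp only [map_mul, map_inv, map_list_prod, List.map_map, mul_assoc] at relation
  rw [inv_mul_eq_one] at relation
  rw [partialProd_natCast, mul_assoc]
  push_cast
  simpa [Function.comp_def, PresentedGroup.of] using relation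

theorem closure_range_universalSeq (m n : ℕ) :
    Subgroup.closure (range (universalSeq m n)) = ⊤ := by
  refine top_le_iff.1 ((PresentedGroup.closure_range_of _).ge.trans ?_)
  rw [Subgroup.closure_le]
  rintro _ ⟨k, rfl⟩
  obtain ⟨j, rfl⟩ := ZMod.intCast_surjective k
  have := partialProd_add_one
    (fun k : ℤ => PresentedGroup.of (rels := relators m n) (k : ZMod m)) (j - 1)
  rw [sub_add_cancel, ← inv_mul_eq_iff_eq_mul] at this
  rw [← this]
  exact Subgroup.mul_mem _ (Subgroup.inv_mem _ (Subgroup.subset_closure ⟨_, rfl⟩))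
    (Subgroup.subset_closure ⟨_, rfl⟩)

theorem IsBiperiodic.exists_hom {m n : ℕ} {Q : ℤ → H} (hQ : IsBiperiodic m n Q) :
    ∃ s : PresentedGroup (relators m n) →* H, ∀ l, s (universalSeq m n l) = Q l := by
  obtain ⟨h, periodic, conj, rfl⟩ := hQ.exists_partialProd_eq
  have h_cast (k : ℤ) : h ((k : ZMod m).cast) = h k := by
    rw [ZMod.coe_intCast, Int.emod_def, mul_comm]
    exact periodic.sub_int_mul_eq _
  have h_relators : ∀ r ∈ relators m n, FreeGroup.lift (fun k : ZMod m => h k.cast) r = 1 := by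
    rintro _ ⟨k, rfl⟩
    obtain ⟨j, rfl⟩ := ZMod.intCast_surjective k
    have h_sum : h ((j : ZMod m) + (n : ZMod m)).cast = h (j + n) := by
      rw [← h_cast (j + n), Int.cast_add, Int.cast_natCast]
    have h_succ (i : ℕ) : h ((i + 1 : ℕ) : ZMod m).cast = h (i + 1 : ℕ) := by
      rw [← h_cast (i + 1 : ℕ), Int.cast_natCast]
    simp only [map_mul, map_inv, map_list_prod, List.map_map, Function.comp_def,
      FreeGroup.lift_apply_of, h_cast, h_sum, h_succ]
    rw [← partialProd_natCast, conj j]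
    group
  refine ⟨PresentedGroup.toGroup h_relators, fun l => ?_⟩
  rw [universalSeq, map_partialProd]
  simp [h_cast]

end Biperiodic

/-! ### Covers by two sheets -/

section Levels

/-- A map `E → X` with a continuous phase on `E`, thought of as an argument measured in full turns,
such that `ℤ` acts simply transitively on the nonempty fibres by translating the phase. -/
structure PhasedMap (E X : Type*) [TopologicalSpace E] [TopologicalSpace X] where
  proj : C(E, X)
  phase : C(E, ℝ)
  shift : ℤ → C(E, E)
  proj_shift : ∀ N p, proj (shift N p) = proj p
  phase_shift : ∀ N p, phase (shift N p) = phase p + N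
  exists_eq_shift : ∀ ⦃p q⦄, proj p = proj q → ∃ N, q = shift N p

variable {X E F G : Type*} [TopologicalSpace X] [TopologicalSpace E] [TopologicalSpace F] [Group G]
  (A : PhasedMap E X) (B : PhasedMap F X) (m n : ℕ)

/-- The integer `l` such that `n * B.phase q - m * A.phase p` lies between `l` and `l + 1`. -/
noncomputable def level (p : E) (q : F) : ℤ := ⌊n * B.phase q - m * A.phase p⌋

theorem level_shift_left (p : E) (q : F) (N : ℤ) :
    level A B m n (A.shift N p) q = level A B m n p q + -N * m := by
  rw [level, level, A.phase_shift, ← Int.floor_add_intCast]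
  push_cast
  ring_nf

theorem level_shift_right (p : E) (q : F) (N : ℤ) :
    level A B m n p (B.shift N q) = level A B m n p q + N * n := by
  rw [level, level, B.phase_shift, ← Int.floor_add_intCast]
  push_cast
  ring_nf

/-- The cocycle on `E ⊕ F` which compares `E` with `F` by the term of `P` at their level. -/
noncomputable def sheetCocycle (P : ℤ → G) : E ⊕ F → E ⊕ F → G
  | .inl p, .inl p' => P m ^ round (A.phase p' - A.phase p)
  | .inl p, .inr q => P (level A B m n p q)
  | .inr q, .inl p => (P (level A B m n p q))⁻¹
  | .inr q, .inr q' => P n ^ round (B.phase q' - B.phase q)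

/-- The two sheets as a single map, whose fibre product carries the cocycle. -/
def sumProj : E ⊕ F → X := Sum.elim A.proj B.proj

/-- Over each point common to both sheets the two multiples of the phases never differ by an
integer, so that the level is locally constant. -/
def LevelSeparated : Prop :=
  ∀ p q, A.proj p = B.proj q → ∀ l : ℤ, n * B.phase q - m * A.phase p ≠ l

theorem eventually_floor_eq {x : ℝ} (hx : ∀ l : ℤ, x ≠ l) : ∀ᶠ y in 𝓝 x, ⌊y⌋ = ⌊x⌋ := by
  filter_upwards [Ioo_mem_nhds ((Int.floor_le x).lt_of_ne (hx _).symm) (Int.lt_floor_add_one x)]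
    with y hy using Int.floor_eq_iff.2 ⟨hy.1.le, hy.2⟩

theorem PhasedMap.eventually_round_eq {p q : E} (h : A.proj p = A.proj q) :
    ∀ᶠ r : E × E in 𝓝 (p, q),
      round (A.phase r.2 - A.phase r.1) = round (A.phase q - A.phase p) := by
  obtain ⟨N, rfl⟩ := A.exists_eq_shift h
  have cont : Continuous fun r : E × E => A.phase r.2 - A.phase r.1 + 1 / 2 := by fun_prop
  simp only [round_eq]
  refine cont.continuousAt.eventually (eventually_floor_eq fun l hl => ?_)
  simp only [A.phase_shift, add_sub_cancel_left] at hl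
  have : 2 * N + 1 = 2 * l := by
    exact_mod_cast show (2 * N + 1 : ℝ) = 2 * l by linarith
  omega

variable {A B m n}

theorem eventually_level_eq (hsep : LevelSeparated A B m n) {p : E} {q : F}
    (h : A.proj p = B.proj q) :
    ∀ᶠ r : E × F in 𝓝 (p, q), level A B m n r.1 r.2 = level A B m n p q := by
  have cont : Continuous fun r : E × F => n * B.phase r.2 - m * A.phase r.1 := by fun_prop
  exact cont.continuousAt.eventually (eventually_floor_eq (hsep p q h))

theorem IsBiperiodic.level_shift_left {P : ℤ → G} (hP : IsBiperiodic m n P) (p : E) (q : F)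
    (N : ℤ) :
    P (level A B m n (A.shift N p) q) = P m ^ (-N) * P (level A B m n p q) := by
  rw [CurveComplement.level_shift_left, hP.add_mul_left_period]

theorem IsBiperiodic.level_shift_right {P : ℤ → G} (hP : IsBiperiodic m n P) (p : E) (q : F)
    (N : ℤ) : P (level A B m n p (B.shift N q)) = P (level A B m n p q) * P n ^ N := by
  rw [CurveComplement.level_shift_right, hP.add_mul_right_period]

theorem eventually_nhds_prodMk {Y Z : Type*} [TopologicalSpace Y] [TopologicalSpace Z] {i : E → Y}
    {j : F → Z} (hi : IsOpenEmbedding i) (hj : IsOpenEmbedding j) {p : E} {q : F}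
    {φ : Y × Z → Prop} :
    (∀ᶠ r in 𝓝 (i p, j q), φ r) ↔ ∀ᶠ r : E × F in 𝓝 (p, q), φ (i r.1, j r.2) := by
  change (∀ᶠ r in 𝓝 (Prod.map i j (p, q)), φ r) ↔ _
  rw [← (hi.prodMap hj).map_nhds_eq, eventually_map]
  rfl

theorem isCocycle_sheetCocycle (hsep : LevelSeparated A B m n) {P : ℤ → G}
    (hP : IsBiperiodic m n P) : IsCocycle (sumProj A B) (sheetCocycle A B m n P) where
  mul := by
    rintro (p | p) (q | q) (r | r) hpq hqr
    · obtain ⟨M, rfl⟩ := A.exists_eq_shift hpq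
      obtain ⟨N, rfl⟩ := A.exists_eq_shift hqr
      simp [sheetCocycle, A.phase_shift, add_assoc, zpow_add]
    · obtain ⟨N, rfl⟩ := A.exists_eq_shift hpq
      simp [sheetCocycle, A.phase_shift, hP.level_shift_left]
    · obtain ⟨N, rfl⟩ := A.exists_eq_shift (hpq.trans hqr)
      simp [sheetCocycle, A.phase_shift, hP.level_shift_left]
    · obtain ⟨N, rfl⟩ := B.exists_eq_shift hqr
      simp [sheetCocycle, B.phase_shift, hP.level_shift_right]
    · obtain ⟨N, rfl⟩ := A.exists_eq_shift hqr
      simp [sheetCocycle, A.phase_shift, hP.level_shift_left]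
    · obtain ⟨N, rfl⟩ := B.exists_eq_shift (hpq.trans hqr)
      simp [sheetCocycle, B.phase_shift, hP.level_shift_right]
    · obtain ⟨N, rfl⟩ := B.exists_eq_shift hpq
      simp [sheetCocycle, B.phase_shift, hP.level_shift_right]
    · obtain ⟨M, rfl⟩ := B.exists_eq_shift hpq
      obtain ⟨N, rfl⟩ := B.exists_eq_shift hqr
      simp [sheetCocycle, B.phase_shift, add_assoc, zpow_add]
  eventually_eq := by
    rintro (p | p) (q | q) h
    · refine (eventually_nhds_prodMk .inl .inl).2 ?_
      filter_upwards [A.eventually_round_eq h] with r hr _ using congrArg (P m ^ ·) hr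
    · refine (eventually_nhds_prodMk .inl .inr).2 ?_
      filter_upwards [eventually_level_eq hsep h] with r hr _ using congrArg P hr
    · refine (eventually_nhds_prodMk .inr .inl).2 ?_
      filter_upwards [continuous_swap.continuousAt.eventually
        (eventually_level_eq hsep (p := q) (q := p) h.symm)] with r hr _
        using congrArg (fun l => (P l)⁻¹) hr
    · refine (eventually_nhds_prodMk .inr .inr).2 ?_
      filter_upwards [B.eventually_round_eq h] with r hr _ using congrArg (P n ^ ·) hr

end Levels

section TwoSheets

variable {X E F G : Type*} [TopologicalSpace X] [TopologicalSpace E] [TopologicalSpace F] [Group G]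

/-- The points of the fibre product of the two sheets at level `l`. -/
def levelSet (A : PhasedMap E X) (B : PhasedMap F X) (m n : ℕ) (l : ℤ) : Set (E × F) :=
  {r | A.proj r.1 = B.proj r.2 ∧ level A B m n r.1 r.2 = l}

/-- A cover of `X` by two path-connected sheets in which paths with the same end points become
homotopic, and whose overlap splits into its levels. -/
structure IsTwoSheetedCover (A : PhasedMap E X) (B : PhasedMap F X) (m n : ℕ) : Prop where
  isLocallySplit : IsLocallySplit (sumProj A B)
  left_connected : PathConnectedSpace E
  right_connected : PathConnectedSpace F
  left_parallel : ParallelPathsHomotopic A.proj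
  right_parallel : ParallelPathsHomotopic B.proj
  levelSeparated : LevelSeparated A B m n
  isPathConnected_levelSet : ∀ l, IsPathConnected (levelSet A B m n l)

theorem exists_inl_or_inr {Z : Type*} [TopologicalSpace Z] [PreconnectedSpace Z] (δ : C(Z, E ⊕ F)) :
    (∃ ε : C(Z, E), ∀ t, δ t = .inl (ε t)) ∨ ∃ ε : C(Z, F), ∀ t, δ t = .inr (ε t) := by
  rcases Sum.isPreconnected_iff.1 (isPreconnected_range δ.continuous) with
    ⟨T, -, hT⟩ | ⟨T, -, hT⟩
  · choose ε _ hε using fun t => hT.subset (mem_range_self (f := δ) t)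
    refine .inl ⟨⟨ε, (IsEmbedding.inl (Y := F)).continuous_iff.2 ?_⟩, fun t => (hε t).symm⟩
    exact δ.continuous.congr fun t => (hε t).symm
  · choose ε _ hε using fun t => hT.subset (mem_range_self (f := δ) t)
    refine .inr ⟨⟨ε, (IsEmbedding.inr (X := E)).continuous_iff.2 ?_⟩, fun t => (hε t).symm⟩
    exact δ.continuous.congr fun t => (hε t).symm

theorem continuous_sumProj (A : PhasedMap E X) (B : PhasedMap F X) : Continuous (sumProj A B) :=
  A.proj.continuous.sumElim B.proj.continuous

namespace IsTwoSheetedCover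

variable {A : PhasedMap E X} {B : PhasedMap F X} {m n : ℕ} (h : IsTwoSheetedCover A B m n)
include h

theorem parallelPathsHomotopic : ParallelPathsHomotopic (sumProj A B) := by
  intro x y γ γ' δ δ' hδ hδ' h₀ h₁
  obtain ⟨ε, hε⟩ | ⟨ε, hε⟩ := exists_inl_or_inr δ <;>
  obtain ⟨ε', hε'⟩ | ⟨ε', hε'⟩ := exists_inl_or_inr δ' <;>
  simp only [hε, hε', Sum.inl.injEq, Sum.inr.injEq, reduceCtorEq] at hδ hδ' h₀ h₁
  · exact h.left_parallel γ γ' ε ε' hδ hδ' h₀ h₁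
  · exact h.right_parallel γ γ' ε ε' hδ hδ' h₀ h₁

variable {w : X} {p₀ : E} {q₀ : F} (hp₀ : A.proj p₀ = w) (hq₀ : B.proj q₀ = w)

/-- One root on each sheet. -/
def roots : Roots (sumProj A B) w where
  root := Sum.elim (fun _ => .inl p₀) (fun _ => .inr q₀)
  proj_root := by rintro (_ | _) <;> assumption
  joined_root := by
    have := h.left_connected
    have := h.right_connected
    rintro (p | q)
    exacts [(PathConnectedSpace.joined p₀ p).map continuous_inl,
      (PathConnectedSpace.joined q₀ q).map continuous_inr]
  root_eq := by
    rintro p q ⟨γ⟩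
    obtain ⟨ε, hε⟩ | ⟨ε, hε⟩ := exists_inl_or_inr γ.toContinuousMap <;>
    · have h₀ := hε 0
      have h₁ := hε 1
      simp only [Path.coe_toContinuousMap, γ.source, γ.target] at h₀ h₁
      rw [h₀, h₁]
      rfl

end IsTwoSheetedCover

section Loops

variable {A : PhasedMap E X} {B : PhasedMap F X} {m n : ℕ} {w x x' : X} {p p' : E} {q q' : F}
  (R : Roots (sumProj A B) w)

/-- The loop `Roots.loop` between a point of the left and a point of the right sheet. -/
noncomputable def crossLoop (hp : A.proj p = x) (hq : B.proj q = x) : FundamentalGroup X w :=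
  R.loop (p := .inl p) (q := .inr q) (continuous_sumProj A B) hp hq

/-- The loop `Roots.loop` between two points of the left sheet. -/
noncomputable def leftLoop (hp : A.proj p = x) (hp' : A.proj p' = x) : FundamentalGroup X w :=
  R.loop (p := .inl p) (q := .inl p') (continuous_sumProj A B) hp hp'

/-- The loop `Roots.loop` between two points of the right sheet. -/
noncomputable def rightLoop (hq : B.proj q = x) (hq' : B.proj q' = x) : FundamentalGroup X w :=
  R.loop (p := .inr q) (q := .inr q') (continuous_sumProj A B) hq hq'

theorem leftLoop_eq_mul_inv (hp : A.proj p = x) (hp' : A.proj p' = x) (hq : B.proj q = x) :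
    leftLoop R hp hp' = crossLoop R hp hq * (crossLoop R hp' hq)⁻¹ :=
  eq_mul_inv_of_mul_eq (R.loop_mul _ _ _)

theorem rightLoop_eq_inv_mul (hp : A.proj p = x) (hq : B.proj q = x) (hq' : B.proj q' = x) :
    rightLoop R hq hq' = (crossLoop R hp hq)⁻¹ * crossLoop R hp hq' :=
  eq_inv_mul_of_mul_eq (R.loop_mul _ _ _)

namespace IsTwoSheetedCover

variable (h : IsTwoSheetedCover A B m n)
include h

theorem crossLoop_eq (hp : A.proj p = x) (hq : B.proj q = x) (hp' : A.proj p' = x')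
    (hq' : B.proj q' = x') (hl : level A B m n p q = level A B m n p' q') :
    crossLoop R hp hq = crossLoop R hp' hq' := by
  subst hp hp'
  have := isPathConnected_iff_pathConnectedSpace.1 (h.isPathConnected_levelSet (level A B m n p q))
  let γ : Path (X := levelSet A B m n (level A B m n p q)) ⟨(p, q), hq.symm, rfl⟩
    ⟨(p', q'), hq'.symm, hl.symm⟩ := PathConnectedSpace.somePath _ _
  have := R.loop_eq_of_lifts (hπ := continuous_sumProj A B) h.parallelPathsHomotopic
    (γ.map (f := fun r => A.proj r.1.1) (by fun_prop))
    (δ := ⟨fun t => .inl (γ t).1.1, by fun_prop⟩)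
    (ε := ⟨fun t => .inr (γ t).1.2, by fun_prop⟩)
    (fun t => rfl) (fun t => (γ t).2.1.symm)
  simpa [crossLoop, sumProj, hq, hq'] using this

theorem leftLoop_shift_eq (p p' : E) (N : ℤ) :
    leftLoop R rfl (A.proj_shift N p) = leftLoop R rfl (A.proj_shift N p') := by
  have := h.left_connected
  let γ := PathConnectedSpace.somePath p p'
  have := R.loop_eq_of_lifts (hπ := continuous_sumProj A B) h.parallelPathsHomotopic
    (γ.map A.proj.continuous)
    (δ := ⟨fun t => .inl (γ t), by fun_prop⟩)
    (ε := ⟨fun t => .inl (A.shift N (γ t)), by fun_prop⟩)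
    (fun t => rfl) (fun t => A.proj_shift N (γ t))
  simpa [leftLoop, sumProj, A.proj_shift] using this

theorem rightLoop_shift_eq (q q' : F) (N : ℤ) :
    rightLoop R rfl (B.proj_shift N q) = rightLoop R rfl (B.proj_shift N q') := by
  have := h.right_connected
  let γ := PathConnectedSpace.somePath q q'
  have := R.loop_eq_of_lifts (hπ := continuous_sumProj A B) h.parallelPathsHomotopic
    (γ.map B.proj.continuous)
    (δ := ⟨fun t => .inr (γ t), by fun_prop⟩)
    (ε := ⟨fun t => .inr (B.shift N (γ t)), by fun_prop⟩)
    (fun t => rfl) (fun t => B.proj_shift N (γ t))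
  simpa [rightLoop, sumProj, B.proj_shift] using this

theorem exists_level_eq (l : ℤ) : ∃ p q, A.proj p = B.proj q ∧ level A B m n p q = l :=
  let ⟨⟨p, q⟩, hpq⟩ := (h.isPathConnected_levelSet l).nonempty
  ⟨p, q, hpq⟩

theorem exists_crossLoop_eq : ∃ Q : ℤ → FundamentalGroup X w, ∀ ⦃p q x⦄ (hp : A.proj p = x)
    (hq : B.proj q = x), crossLoop R hp hq = Q (level A B m n p q) := by
  choose p q hpq hl using h.exists_level_eq
  exact ⟨fun l => crossLoop R (hpq l) rfl, fun _ _ _ hp hq => h.crossLoop_eq R _ _ _ _ (hl _).symm⟩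

variable {R} {Q : ℤ → FundamentalGroup X w}
  (hQ : ∀ ⦃p q x⦄ (hp : A.proj p = x) (hq : B.proj q = x),
    crossLoop R hp hq = Q (level A B m n p q))
include hQ

theorem leftLoop_shift (zero : Q 0 = 1) (p : E) (N : ℤ) :
    leftLoop R rfl (A.proj_shift N p) = (Q (-N * m))⁻¹ := by
  obtain ⟨p', q', hpq, hl⟩ := h.exists_level_eq 0
  rw [h.leftLoop_shift_eq R p p', leftLoop_eq_mul_inv R _ _ hpq.symm, hQ, hQ, level_shift_left, hl,
    zero, one_mul, zero_add]

theorem rightLoop_shift (zero : Q 0 = 1) (q : F) (N : ℤ) :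
    rightLoop R rfl (B.proj_shift N q) = Q (N * n) := by
  obtain ⟨p', q', hpq, hl⟩ := h.exists_level_eq 0
  rw [h.rightLoop_shift_eq R q q', rightLoop_eq_inv_mul R hpq, hQ, hQ, level_shift_right, hl,
    zero, inv_one, one_mul, zero_add]

theorem isBiperiodic (zero : Q 0 = 1) : IsBiperiodic m n Q where
  zero := zero
  add_left_period l := by
    obtain ⟨p, q, hpq, rfl⟩ := h.exists_level_eq l
    have := leftLoop_eq_mul_inv R rfl (A.proj_shift (-1) p) hpq.symm
    rw [h.leftLoop_shift hQ zero, hQ, hQ, level_shift_left, ← inv_inj, mul_inv_rev] at this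
    simpa only [inv_inv, neg_neg, one_mul, eq_mul_inv_iff_mul_eq, eq_comm] using this
  add_right_period l := by
    obtain ⟨p, q, hpq, rfl⟩ := h.exists_level_eq l
    have := rightLoop_eq_inv_mul R hpq rfl (B.proj_shift 1 q)
    rw [h.rightLoop_shift hQ zero, hQ, hQ, level_shift_right] at this
    simpa using (eq_inv_mul_iff_mul_eq.1 this).symm

theorem map_sheetCocycle (zero : Q 0 = 1) {P : ℤ → G} (s : G →* FundamentalGroup X w)
    (hs : ∀ l, s (P l) = Q l) {y z : E ⊕ F} (hy : sumProj A B y = x) (hz : sumProj A B z = x) :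
    s (sheetCocycle A B m n P y z) = R.loop (continuous_sumProj A B) hy hz := by
  have periodic := h.isBiperiodic hQ zero
  subst hy
  rcases y with p | q <;> rcases z with p' | q'
  · obtain ⟨N, rfl⟩ := A.exists_eq_shift hz.symm
    refine Eq.trans ?_ (h.leftLoop_shift hQ zero p N).symm
    rw [sheetCocycle, A.phase_shift, add_sub_cancel_left, round_intCast, map_zpow, hs,
      ← zero_add (-N * _ : ℤ), periodic.add_mul_left_period, zero, mul_one, zpow_neg, inv_inv]
  · exact (hs _).trans (hQ rfl hz).symm
  · rw [← R.loop_inv]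
    exact (map_inv s _).trans (congrArg _ ((hs _).trans (hQ _ _).symm))
  · obtain ⟨N, rfl⟩ := B.exists_eq_shift hz.symm
    refine Eq.trans ?_ (h.rightLoop_shift hQ zero q N).symm
    rw [sheetCocycle, B.phase_shift, add_sub_cancel_left, round_intCast, map_zpow, hs,
      ← zero_add (N * _ : ℤ), periodic.add_mul_right_period, zero, one_mul]

end IsTwoSheetedCover

end Loops

namespace IsTwoSheetedCover

variable {A : PhasedMap E X} {B : PhasedMap F X} {m n : ℕ} (h : IsTwoSheetedCover A B m n)
include h

theorem closure_sheetCocycle {P : ℤ → G} (hgen : Subgroup.closure (range P) = ⊤) :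
    Subgroup.closure {g | ∃ y z, sumProj A B y = sumProj A B z ∧ sheetCocycle A B m n P y z = g} =
      ⊤ := by
  refine top_le_iff.1 (hgen.ge.trans (Subgroup.closure_mono ?_))
  rintro _ ⟨l, rfl⟩
  obtain ⟨p, q, hpq, rfl⟩ := h.exists_level_eq l
  exact ⟨.inl p, .inr q, hpq, rfl⟩

theorem pathConnectedSpace : PathConnectedSpace X := by
  have := h.left_connected
  have := h.right_connected
  obtain ⟨p₀, q₀, h₀, -⟩ := h.exists_level_eq 0
  have joined (x : X) : Joined (A.proj p₀) x := by
    obtain ⟨p | q, rfl⟩ := h.isLocallySplit.surjective x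
    · exact (PathConnectedSpace.joined p₀ p).map A.proj.continuous
    · exact h₀ ▸ (PathConnectedSpace.joined q₀ q).map B.proj.continuous
  exact ⟨⟨A.proj p₀⟩, fun x y => (joined x).symm.trans (joined y)⟩

theorem fundamentalGroup_mulEquiv (w : X) :
    Nonempty (FundamentalGroup X w ≃* PresentedGroup (relators m n)) := by
  have := h.pathConnectedSpace
  obtain ⟨p₀, q₀, h₀, level₀⟩ := h.exists_level_eq 0
  let R := h.roots h₀ rfl
  obtain ⟨Q, hQ⟩ := h.exists_crossLoop_eq R
  have zero : Q 0 = 1 := by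
    rw [← level₀, ← hQ h₀ rfl]
    exact R.loop_root h.parallelPathsHomotopic (.inl p₀) (.inr q₀)
  obtain ⟨s, hs⟩ := (h.isBiperiodic hQ zero).exists_hom
  have loop_eq ⦃y z x⦄ (hy : sumProj A B y = x) (hz : sumProj A B z = x) :=
    h.map_sheetCocycle hQ zero s hs hy hz
  have cocycle_root (y z) :
      sheetCocycle A B m n (universalSeq m n) (R.root y) (R.root z) = 1 := by
    have universal_zero := (isBiperiodic_universalSeq m n).zero
    rcases y with p | q <;> rcases z with p' | q' <;>
    simp [R, roots, sheetCocycle, level₀, universal_zero]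
  have bijective : Function.Bijective s :=
    ⟨R.injective_of_loop s loop_eq
      (isCocycle_sheetCocycle h.levelSeparated (isBiperiodic_universalSeq m n)) h.isLocallySplit
      cocycle_root (h.closure_sheetCocycle (closure_range_universalSeq m n)),
    R.surjective_of_loop s loop_eq h.isLocallySplit h.parallelPathsHomotopic⟩
  exact ⟨(FundamentalGroup.fundamentalGroupMulEquivOfPathConnected w _).trans
    (MulEquiv.ofBijective s bijective).symm⟩

end IsTwoSheetedCover

end TwoSheets

/-! ### Continuous arguments -/

section Arguments

/-- `θ` is an argument of the nonzero complex number `z`. -/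
def IsArg (z : ℂ) (θ : ℝ) : Prop := z ≠ 0 ∧ (θ : Real.Angle) = z.arg

theorem isArg_arg {z : ℂ} (hz : z ≠ 0) : IsArg z z.arg := ⟨hz, rfl⟩

theorem isArg_exp (θ : ℝ) : IsArg (Complex.exp (θ * Complex.I)) θ :=
  ⟨Complex.exp_ne_zero _, by
    simpa [Complex.exp_mul_I] using (Complex.arg_cos_add_sin_mul_I_coe_angle (θ : Real.Angle)).symm⟩

namespace IsArg

variable {z w : ℂ} {θ φ : ℝ}

theorem exists_eq_add (hθ : IsArg z θ) (hφ : IsArg z φ) : ∃ N : ℤ, φ = θ + 2 * Real.pi * N := by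
  obtain ⟨N, hN⟩ := Real.Angle.angle_eq_iff_two_pi_dvd_sub.1 (hφ.2.trans hθ.2.symm)
  exact ⟨N, by linarith⟩

theorem add_two_pi_mul (hθ : IsArg z θ) (N : ℤ) : IsArg z (θ + 2 * Real.pi * N) :=
  ⟨hθ.1, (Real.Angle.angle_eq_iff_two_pi_dvd_sub.2 ⟨N, by ring⟩).trans hθ.2⟩

theorem pow (hθ : IsArg z θ) (n : ℕ) : IsArg (z ^ n) (n * θ) :=
  ⟨pow_ne_zero n hθ.1, by
    rw [Complex.arg_pow_coe_angle, ← hθ.2, Real.Angle.natCast_mul_eq_nsmul]⟩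

theorem mul (hθ : IsArg z θ) (hφ : IsArg w φ) : IsArg (z * w) (θ + φ) :=
  ⟨mul_ne_zero hθ.1 hφ.1, by rw [Complex.arg_mul_coe_angle hθ.1 hφ.1, ← hθ.2, ← hφ.2]; rfl⟩

theorem ofReal_mul (hθ : IsArg z θ) {r : ℝ} (hr : 0 < r) : IsArg (r * z) θ :=
  ⟨mul_ne_zero (Complex.ofReal_ne_zero.2 hr.ne') hθ.1, by rw [Complex.arg_real_mul z hr, hθ.2]⟩

theorem norm_mul_exp (hθ : IsArg z θ) : ‖z‖ * Complex.exp (θ * Complex.I) = z := by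
  obtain ⟨N, rfl⟩ := (isArg_arg hθ.1).exists_eq_add hθ
  conv_rhs => rw [← Complex.norm_mul_exp_arg_mul_I z]
  congr 1
  exact Complex.exp_eq_exp_iff_exists_int.2 ⟨N, by push_cast; ring⟩

end IsArg

theorem exists_continuousOn_isArg {T : Type*} [TopologicalSpace T] {κ : T → ℂ} (hκ : Continuous κ)
    {t₀ : T} {θ : ℝ} (hθ : IsArg (κ t₀) θ) :
    ∃ U, IsOpen U ∧ t₀ ∈ U ∧ ∃ β : T → ℝ, ContinuousOn β U ∧ β t₀ = θ ∧
      ∀ t ∈ U, IsArg (κ t) (β t) := by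
  have quotient : Continuous fun t => κ t / κ t₀ := hκ.div_const _
  refine ⟨{t | κ t / κ t₀ ∈ Complex.slitPlane}, Complex.isOpen_slitPlane.preimage quotient, ?_,
    fun t => θ + (κ t / κ t₀).arg, fun t ht => ?_, ?_, fun t ht => ?_⟩
  · simp [div_self hθ.1]
  · exact (continuousAt_const.add <| (Complex.continuousAt_arg ht).comp
      (f := fun t => κ t / κ t₀) quotient.continuousAt).continuousWithinAt
  · simp [div_self hθ.1]
  · simpa [mul_div_cancel₀ _ hθ.1] using hθ.mul (isArg_arg (Complex.slitPlane_ne_zero ht))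

theorem isArg_of_isArg_pow {T : Type*} [TopologicalSpace T] [PreconnectedSpace T] {κ : T → ℂ}
    {β : T → ℝ} (hκ : Continuous κ) (hβ : Continuous β) {m : ℕ} (hm : 0 < m)
    (hpow : ∀ t, IsArg (κ t ^ m) (m * β t)) {t₀ : T} (h₀ : IsArg (κ t₀) (β t₀)) (t : T) :
    IsArg (κ t) (β t) := by
  have ne_zero (t) : κ t ≠ 0 := ne_zero_pow hm.ne' (hpow t).1
  let error : T → Real.Angle := fun t => β t - (κ t).arg
  have cont : Continuous error := by
    refine (Real.Angle.continuous_coe.comp hβ).sub (continuous_iff_continuousAt.2 fun t => ?_)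
    exact (Complex.continuousAt_arg_coe_angle (ne_zero t)).comp hκ.continuousAt
  have torsion (t) : m • error t = 0 := by
    rw [smul_sub, ← Complex.arg_pow_coe_angle, ← (hpow t).2, Real.Angle.natCast_mul_eq_nsmul,
      sub_self]
  have finite : (range error).Finite := by
    have := Fact.mk Real.two_pi_pos
    exact (AddCircle.finite_torsion (2 * Real.pi) hm).subset (range_subset_iff.2 torsion)
  have subsingleton : (range error).Subsingleton := by
    by_contra h
    exact (isPreconnected_range cont).infinite_of_nontrivial (not_subsingleton_iff.1 h) finite
  have : error t = error t₀ := subsingleton ⟨t, rfl⟩ ⟨t₀, rfl⟩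
  exact ⟨ne_zero t, sub_eq_zero.1 (this.trans (sub_eq_zero.2 h₀.2))⟩

/-- The points where `k` is nonzero together with an argument of its value. -/
abbrev ArgSpace {X : Type*} (k : X → ℂ) : Type _ := {q : X × ℝ // IsArg (k q.1) q.2}

end Arguments

section ArgCover

variable {X Y : Type*} [TopologicalSpace X] [TopologicalSpace Y]

/-- The points of `V` together with an argument of `K`: the pull-back to `V` of the universal cover
of `ℂ ∖ {0}`. -/
def ArgCover (K : X → ℂ) (V : Set X) : Type _ := {q : X × ℝ // q.1 ∈ V ∧ IsArg (K q.1) q.2}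

namespace ArgCover

variable {K : X → ℂ} {V : Set X}

instance : TopologicalSpace (ArgCover K V) := instTopologicalSpaceSubtype

theorem continuous_val : Continuous (Subtype.val : ArgCover K V → X × ℝ) := continuous_subtype_val

/-- The projection of the cover, with the argument as its phase. -/
noncomputable def phasedMap (K : X → ℂ) (V : Set X) : PhasedMap (ArgCover K V) X where
  proj := ⟨fun q => q.1.1, continuous_fst.comp continuous_val⟩
  phase := ⟨fun q => q.1.2 / (2 * Real.pi), (continuous_snd.comp continuous_val).div_const _⟩
  shift N := ⟨fun q => ⟨(q.1.1, q.1.2 + 2 * Real.pi * N), q.2.1, q.2.2.add_two_pi_mul N⟩,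
    ((continuous_fst.comp continuous_val).prodMk
      ((continuous_snd.comp continuous_val).add_const _)).subtype_mk _⟩
  proj_shift _ _ := rfl
  phase_shift N q := by
    change (q.1.2 + 2 * Real.pi * N) / (2 * Real.pi) = q.1.2 / (2 * Real.pi) + N
    field_simp
  exists_eq_shift := by
    rintro ⟨⟨x, θ⟩, hx, hθ⟩ ⟨⟨y, φ⟩, hy, hφ⟩ (rfl : x = y)
    obtain ⟨N, rfl⟩ := hθ.exists_eq_add hφ
    exact ⟨N, rfl⟩

end ArgCover

theorem LocalSection.exists_mem_base {π : Y → X} {U : Set X} (hU : IsOpen U) (s : C(U, Y))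
    (hs : ∀ u, π (s u) = u) {x : X} (hx : x ∈ U) : ∃ S : LocalSection π, x ∈ S.base := by
  have extend_apply (u : U) := Subtype.val_injective.extend_apply s (fun _ => s ⟨x, hx⟩) u
  refine ⟨⟨U, hU, Function.extend Subtype.val s fun _ => s ⟨x, hx⟩, ?_, fun u hu => ?_⟩, hx⟩
  · rw [continuousOn_iff_continuous_domRestrict]
    exact s.continuous.congr fun u => (extend_apply u).symm
  · exact (congrArg π (extend_apply ⟨u, hu⟩)).trans (hs _)

theorem ArgCover.exists_localSection {K : X → ℂ} (hK : Continuous K) {V : Set X} (hV : IsOpen V)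
    {x : X} (hx : x ∈ V) (ne_zero : K x ≠ 0) :
    ∃ S : LocalSection (phasedMap K V).proj, x ∈ S.base := by
  obtain ⟨U, hU, hxU, β, hβ, -, isArg⟩ := exists_continuousOn_isArg hK (isArg_arg ne_zero)
  have cont : Continuous fun u : ↥(U ∩ V) => β u :=
    continuousOn_iff_continuous_domRestrict.1 (hβ.mono inter_subset_left)
  exact LocalSection.exists_mem_base (hU.inter hV)
    ⟨fun u => ⟨(u, β u), u.2.2, isArg u u.2.1⟩, (continuous_subtype_val.prodMk cont).subtype_mk _⟩
    (fun _ => rfl) ⟨hxU, hx⟩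

theorem LocalSection.exists_comp {Z : Type*} [TopologicalSpace Z] {π : Y → X} {i : Z → Y}
    {ρ : Z → X} (hi : Continuous i) (h : ∀ z, π (i z) = ρ z) {x : X}
    (hx : ∃ S : LocalSection ρ, x ∈ S.base) : ∃ S : LocalSection π, x ∈ S.base :=
  let ⟨S, hS⟩ := hx
  ⟨⟨S.base, S.isOpen_base, i ∘ S.toFun, hi.comp_continuousOn S.continuousOn,
    fun y hy => (h _).trans (S.proj_apply y hy)⟩, hS⟩

/-- Composition of a phased map with a homeomorphism of its target. -/
def PhasedMap.postcomp {E X' : Type*} [TopologicalSpace E] [TopologicalSpace X']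
    (A : PhasedMap E X) (e : X ≃ₜ X') : PhasedMap E X' where
  proj := (e : C(X, X')).comp A.proj
  phase := A.phase
  shift := A.shift
  proj_shift N p := congrArg e (A.proj_shift N p)
  phase_shift := A.phase_shift
  exists_eq_shift _ _ h := A.exists_eq_shift (e.injective h)

theorem ParallelPathsHomotopic.of_nullhomotopic {f : C(Y, X)} (h : f.Nullhomotopic) :
    ParallelPathsHomotopic f := by
  rintro x y γ γ' δ δ' hδ hδ' h₀ h₁
  obtain ⟨c, ⟨H⟩⟩ := h
  let δP : Path (δ 0) (δ 1) := ⟨δ, rfl, rfl⟩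
  let δP' : Path (δ 0) (δ 1) := ⟨δ', h₀.symm, h₁.symm⟩
  have hx : x = f (δ 0) := by rw [hδ, γ.source]
  have hy : y = f (δ 1) := by rw [hδ, γ.target]
  subst hx hy
  obtain rfl : δP.map f.continuous = γ := Path.ext (funext hδ)
  obtain rfl : δP'.map f.continuous = γ' := Path.ext (funext hδ')
  have cancel {a b : X} (α : Path.Homotopic.Quotient a b) (β : Path.Homotopic.Quotient b c) :
      (α.trans β).trans β.symm = α := by
    rw [Path.Homotopic.Quotient.trans_assoc, Path.Homotopic.Quotient.trans_symm,
      Path.Homotopic.Quotient.trans_refl]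
  let e₀ : Path (f (δ 0)) c := H.evalAt (δ 0)
  let e₁ : Path (f (δ 1)) c := H.evalAt (δ 1)
  have through_homotopy (ε : Path (δ 0) (δ 1)) : Path.Homotopic.Quotient.mk (ε.map f.continuous) =
      (Path.Homotopic.Quotient.mk (e₀.trans (.refl c))).trans (.symm (.mk e₁)) := by
    rw [← cancel (.mk (ε.map f.continuous)) (.mk e₁)]
    exact congrArg (fun α => Path.Homotopic.Quotient.trans α (.symm (.mk e₁)))
      (Path.Homotopic.Quotient.eq.2 (Path.Homotopic.map_trans_evalAt H ε))
  exact Path.Homotopic.Quotient.eq.1 ((through_homotopy δP).trans (through_homotopy δP').symm)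

end ArgCover

/-! ### Branched covers of the plane -/

section HomotopyLifting

variable {E B T : Type*} [TopologicalSpace E] [TopologicalSpace B] [TopologicalSpace T]
  {p : E → B} {S : Set B}

theorem exists_homotopy_lift (hp : IsCoveringMapOn p S) {H : C(I × T, B)} (hH : ∀ q, H q ∈ S)
    {f : C(T, E)} (h₀ : ∀ a, H (0, a) = p (f a)) :
    ∃ R : C(I × T, E), (∀ q, p (R q) = H q) ∧ (∀ a, R (0, a) = f a) ∧
      ∀ a, (∀ t, H (t, a) = p (f a)) → ∀ t, R (t, a) = f a := by
  have cover := hp.isCoveringMap_restrictPreimage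
  let HS : C(I × T, S) := ⟨fun q => ⟨H q, hH q⟩, H.continuous.subtype_mk _⟩
  have hf a : f a ∈ p ⁻¹' S := by simpa [← h₀ a] using hH (0, a)
  let fS : C(T, p ⁻¹' S) := ⟨fun a => ⟨f a, hf a⟩, f.continuous.subtype_mk hf⟩
  have HS_zero a : HS (0, a) = S.restrictPreimage p (fS a) := Subtype.ext (h₀ a)
  let L := cover.liftHomotopy HS fS HS_zero
  have lifts q : S.restrictPreimage p (L q) = HS q :=
    congrFun (cover.liftHomotopy_lifts HS fS HS_zero) q
  have L_zero : ∀ a, L (0, a) = fS a := cover.liftHomotopy_zero HS fS HS_zero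
  refine ⟨⟨fun q => (L q).1, by fun_prop⟩, fun q => congrArg Subtype.val (lifts q),
    fun a => congrArg Subtype.val (L_zero a), fun a constant t => ?_⟩
  have L_constant : L (t, a) = L (0, a) := by
    refine cover.const_of_comp (A := I) (g := fun t => L (t, a)) (by fun_prop) (fun t t' => ?_) t 0
    exact (lifts _).trans ((Subtype.ext ((constant t).trans (constant t').symm)).trans
      (lifts _).symm)
  exact congrArg Subtype.val (L_constant.trans (L_zero a))

theorem exists_homotopy_lift_of_isClosed_cover (hp : IsCoveringMapOn p S) {H : C(I × T, B)}
    {f : C(T, E)} (h₀ : ∀ a, H (0, a) = p (f a)) {T₁ T₂ : Set T} (hT₁ : IsClosed T₁)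
    (hT₂ : IsClosed T₂) (hT : T₁ ∪ T₂ = univ) (h₁ : ∀ t, ∀ a ∈ T₁, H (t, a) ∈ S)
    (h₂ : ∀ t, ∀ a ∈ T₂, H (t, a) = p (f a)) :
    ∃ R : C(I × T, E), (∀ q, p (R q) = H q) ∧ (∀ a, R (0, a) = f a) ∧
      ∀ a ∈ T₂, ∀ t, R (t, a) = f a := by
  classical
  obtain ⟨R, proj_R, R_zero, R_const⟩ := exists_homotopy_lift (T := T₁) hp
    (H := H.comp ⟨fun q => (q.1, q.2.1), by fun_prop⟩) (fun q => h₁ _ _ q.2.2)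
    (f := f.comp ⟨Subtype.val, by fun_prop⟩) (fun a => h₀ a)
  let Q : I × T → E := fun q => if h : q.2 ∈ T₁ then R (q.1, ⟨q.2, h⟩) else f q.2
  have Q_of_mem {t a} (h : a ∈ T₁) : Q (t, a) = R (t, ⟨a, h⟩) := dif_pos h
  have Q_of_notMem {t a} (h : a ∉ T₁) : Q (t, a) = f a := dif_neg h
  have Q_const : ∀ a ∈ T₂, ∀ t, Q (t, a) = f a := by
    intro a ha t
    by_cases h : a ∈ T₁
    · exact (Q_of_mem h).trans (R_const ⟨a, h⟩ (fun t => h₂ t a ha) t)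
    · exact Q_of_notMem h
  have cont₁ : ContinuousOn Q (Prod.snd ⁻¹' T₁) := by
    rw [continuousOn_iff_continuous_domRestrict]
    refine (R.continuous.comp
      (f := fun q : (Prod.snd ⁻¹' T₁ : Set (I × T)) => (q.1.1, (⟨q.1.2, q.2⟩ : T₁)))
      (by fun_prop)).congr fun q => (Q_of_mem q.2).symm
  have cont₂ : ContinuousOn Q (Prod.snd ⁻¹' T₂) :=
    ContinuousOn.congr (f := fun q => f q.2) (by fun_prop) fun q hq => Q_const q.2 hq q.1
  have cont : Continuous Q := by
    rw [← continuousOn_univ, ← preimage_univ (f := Prod.snd), ← hT, preimage_union]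
    exact cont₁.union_of_isClosed cont₂ (hT₁.preimage continuous_snd) (hT₂.preimage continuous_snd)
  refine ⟨⟨Q, cont⟩, fun ⟨t, a⟩ => ?_, fun a => ?_, Q_const⟩ <;> by_cases h : a ∈ T₁
  · exact (congrArg p (Q_of_mem h)).trans (proj_R (t, ⟨a, h⟩))
  · have : a ∈ T₂ := (hT.ge (mem_univ a)).resolve_left h
    exact (congrArg p (Q_of_notMem h)).trans (h₂ t a this).symm
  · exact (Q_of_mem h).trans (R_zero ⟨a, h⟩)
  · exact Q_of_notMem h

end HomotopyLifting

section BranchedPower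

/-- A branched cover `ℂ → ℂ` which is the `n`-th power of a continuous function `root`, together
with a finite set containing its nonzero critical values. Unlike polynomials, these maps can be
composed with a twist of the target plane. -/
structure BranchedPower (n : ℕ) where
  toFun : ℂ → ℂ
  root : ℂ → ℂ
  critValues : Set ℂ
  pos : 0 < n
  continuous_root : Continuous root
  apply_eq : ∀ x, toFun x = root x ^ n
  finite_critValues : critValues.Finite
  zero_notMem : (0 : ℂ) ∉ critValues
  isCoveringMapOn : IsCoveringMapOn toFun (critValues ∪ {0})ᶜ
  surjective : Function.Surjective toFun
  isOpenMap : IsOpenMap toFun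
  pathConnectedSpace : PathConnectedSpace (ArgSpace root)

namespace BranchedPower

variable {n : ℕ} (A : BranchedPower n)

instance : CoeFun (BranchedPower n) fun _ => ℂ → ℂ := ⟨toFun⟩

@[fun_prop]
theorem continuous : Continuous A :=
  (A.continuous_root.pow n).congr fun x => (A.apply_eq x).symm

theorem root_ne_zero {x : ℂ} : A.root x ≠ 0 ↔ A x ≠ 0 := by
  rw [A.apply_eq, pow_ne_zero_iff A.pos.ne']

theorem exists_radial_homotopy {T : Type*} [TopologicalSpace T] {f : T → ℂ} (hf : Continuous f)
    {r : T → ℝ} (hr : Continuous r)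
    {T₁ : Set T} (hT₁ : IsClosed T₁) (h₁ : ∀ a ∉ T₁, r a = 1)
    (h : ∀ a ∈ T₁, ∀ t : I, ((1 - t + t * r a : ℝ) : ℂ) * A (f a) ∉ A.critValues ∪ {0}) :
    ∃ R : C(I × T, ℂ), (∀ a, R (0, a) = f a) ∧
      (∀ t a, A (R (t, a)) = ((1 - t + t * r a : ℝ) : ℂ) * A (f a)) ∧
      ∀ a, r a = 1 → ∀ t, R (t, a) = f a := by
  obtain ⟨R, A_R, R_zero, R_const⟩ := exists_homotopy_lift_of_isClosed_cover A.isCoveringMapOn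
    (H := ⟨fun q : I × T => ((1 - q.1 + q.1 * r q.2 : ℝ) : ℂ) * A (f q.2), by fun_prop⟩)
    (f := ⟨f, hf⟩) (by simp) hT₁ (T₂ := {a | r a = 1}) (isClosed_eq (by fun_prop) (by fun_prop))
    (eq_univ_of_forall fun a => or_iff_not_imp_left.2 (h₁ a)) (fun t a ha => h a ha t)
    (fun t a (ha : r a = 1) => by simp [ha])
  exact ⟨R, R_zero, fun t a => A_R (t, a), R_const⟩

end BranchedPower

/-- A positively homogeneous gauge on `ℂ` whose unit ball contains `s` and whose ball of radius `2`
avoids `t`. -/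
structure SeparatingGauge (s t : Set ℂ) where
  toFun : ℂ → ℝ
  continuous : Continuous toFun
  apply_mul : ∀ (c : ℝ) (u : ℂ), 0 ≤ c → toFun (c * u) = c * toFun u
  pos : ∀ u, u ≠ 0 → 0 < toFun u
  lt_one : ∀ u ∈ s, toFun u < 1
  two_lt : ∀ u ∈ t, 2 < toFun u

namespace SeparatingGauge

variable {s t : Set ℂ} (N : SeparatingGauge s t)

instance : CoeFun (SeparatingGauge s t) fun _ => ℂ → ℝ := ⟨toFun⟩

@[fun_prop]
theorem continuous_coe : Continuous N := N.continuous

@[simp]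
theorem apply_zero : N 0 = 0 := by simpa using N.apply_mul 0 0 le_rfl

theorem nonneg (u : ℂ) : 0 ≤ N u := by
  rcases eq_or_ne u 0 with rfl | hu
  exacts [N.apply_zero.ge, (N.pos u hu).le]

theorem ne_mul_of_lt {u v : ℂ} (h : N u < N v) (c : ℝ) (hc : 1 ≤ c) : u ≠ c * v := by
  rintro rfl
  rw [N.apply_mul c v (by linarith)] at h
  nlinarith [N.nonneg v]

theorem notMem_of_one_le {u : ℂ} (hu : 1 ≤ N u) : u ∉ s ∪ {0} := by
  rintro (h | rfl)
  · exact (N.lt_one u h).not_ge hu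
  · norm_num at hu

theorem notMem_of_le_two {u : ℂ} (hu : u ≠ 0) (h : N u ≤ 2) : u ∉ t ∪ {0} := by
  rintro (ht | h₀)
  exacts [(N.two_lt u ht).not_ge h, hu h₀]

end SeparatingGauge

variable {n : ℕ} (A : BranchedPower n) {s t : Set ℂ}

theorem BranchedPower.exists_push_in (N : SeparatingGauge A.critValues t) :
    ∃ R : C(I × ℂ, ℂ), (∀ x, R (0, x) = x) ∧
      (∀ t x, ∃ c : ℝ, 0 < c ∧ c ≤ 1 ∧ A (R (t, x)) = c * A x) ∧
      (∀ x, N (A (R (1, x))) ≤ 1) ∧ ∀ x, N (A x) ≤ 1 → ∀ t, R (t, x) = x := by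
  have max_pos (x : ℂ) : 0 < max 1 (N (A x)) := by positivity
  have scale_pos (t : I) (x : ℂ) : 0 < 1 - (t : ℝ) + t * (max 1 (N (A x)))⁻¹ := by
    rcases eq_or_lt_of_le t.2.1 with ht | ht
    · simp [← ht]
    · have := mul_pos ht (inv_pos.2 (max_pos x))
      linarith [t.2.2]
  obtain ⟨R, R_zero, A_R, R_const⟩ := A.exists_radial_homotopy continuous_id
    (r := fun x => (max 1 (N (A x)))⁻¹) (Continuous.inv₀ (by fun_prop) fun x => (max_pos x).ne')
    (T₁ := {x | 1 ≤ N (A x)}) (isClosed_le (by fun_prop) (by fun_prop))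
    (fun x hx => by rw [max_eq_left (le_of_not_ge hx), inv_one])
    (fun x (hx : 1 ≤ N (A x)) t => by
      refine N.notMem_of_one_le ?_
      have : 0 < N (A x) := by linarith
      rw [id_eq, N.apply_mul _ _ (scale_pos t x).le, max_eq_right hx, add_mul,
        inv_mul_cancel_right₀ this.ne']
      nlinarith [t.2.2])
  refine ⟨R, R_zero, fun t x => ⟨_, scale_pos t x, ?_, A_R t x⟩, fun x => ?_,
    fun x hx => R_const x (by simp [max_eq_left hx])⟩
  · have := inv_le_one_of_one_le₀ (le_max_left 1 (N (A x)))
    nlinarith [t.2.1]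
  · rw [A_R, id_eq, N.apply_mul _ _ (scale_pos 1 x).le]
    simpa using inv_mul_le_one_of_le₀ (le_max_right 1 (N (A x))) (max_pos x).le

theorem BranchedPower.exists_push_out (N : SeparatingGauge s A.critValues) :
    ∃ R : C(I × {y // A y ≠ 0}, ℂ), (∀ y, R (0, y) = y) ∧
      (∀ t y, ∃ c : ℝ, 1 ≤ c ∧ A (R (t, y)) = c * A y) ∧ ∀ y, 2 ≤ N (A (R (1, y))) := by
  have N_pos (y : {y // A y ≠ 0}) : 0 < N (A y) := N.pos _ y.2
  have one_le_scale (t : I) (y : {y // A y ≠ 0}) :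
      1 ≤ 1 - (t : ℝ) + t * max 1 (2 / N (A y)) := by
    nlinarith [le_max_left 1 (2 / N (A y)), t.2.1]
  obtain ⟨R, R_zero, A_R, -⟩ := A.exists_radial_homotopy (T := {y // A y ≠ 0})
    continuous_subtype_val (r := fun y => max 1 (2 / N (A y)))
    (continuous_const.max (continuous_const.div (by fun_prop) fun y => (N_pos y).ne'))
    (T₁ := {y | N (A y) ≤ 2}) (isClosed_le (by fun_prop) (by fun_prop))
    (fun y hy => max_eq_left ((div_le_one (N_pos y)).2 (not_le.1 hy).le))
    (fun y (hy : N (A y) ≤ 2) t => by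
      have scale_pos : 0 < 1 - (t : ℝ) + t * max 1 (2 / N (A y)) :=
        one_pos.trans_le (one_le_scale t y)
      refine N.notMem_of_le_two (mul_ne_zero (Complex.ofReal_ne_zero.2 scale_pos.ne') y.2) ?_
      rw [N.apply_mul _ _ scale_pos.le, max_eq_right ((one_le_div (N_pos y)).2 hy), add_mul,
        mul_assoc, div_mul_cancel₀ _ (N_pos y).ne']
      nlinarith [t.2.1, t.2.2])
  refine ⟨R, R_zero, fun t y => ⟨_, one_le_scale t y, A_R t y⟩, fun y => ?_⟩
  rw [A_R, N.apply_mul _ _ (zero_le_one.trans (one_le_scale 1 y))]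
  simpa using (div_le_iff₀ (N_pos y)).1 (le_max_right 1 (2 / N (A y)))

theorem BranchedPower.exists_polar_lift (N : SeparatingGauge A.critValues t) :
    ∃ Ξ : C(ℝ × ℝ, ℂ), (∀ θ ρ, 1 ≤ ρ → N (A (Ξ (θ, ρ))) = ρ) ∧
      ∀ θ ρ, 1 ≤ ρ → IsArg (A (Ξ (θ, ρ))) θ := by
  let direction (θ : ℝ) : ℂ := Complex.exp (θ * Complex.I)
  have N_pos θ : 0 < N (direction θ) := N.pos _ (Complex.exp_ne_zero _)
  have radius_pos (θ ρ : ℝ) : 0 < max 1 ρ / N (direction θ) := div_pos (by positivity) (N_pos θ)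
  let polar : C(ℝ × ℝ, ℂ) := ⟨fun q => (max 1 q.2 / N (direction q.1) : ℝ) * direction q.1, by
    have : Continuous fun q : ℝ × ℝ => max 1 q.2 / N (direction q.1) :=
      Continuous.div (by fun_prop) (by fun_prop) fun q => (N_pos _).ne'
    fun_prop⟩
  have N_polar θ ρ : N (polar (θ, ρ)) = max 1 ρ := by
    simp only [polar, ContinuousMap.coe_mk]
    rw [N.apply_mul _ _ (radius_pos θ ρ).le, div_mul_cancel₀ _ (N_pos θ).ne']
  obtain ⟨x, hx⟩ := A.surjective (polar (0, 1))
  obtain ⟨R, A_R, -, -⟩ := exists_homotopy_lift A.isCoveringMapOn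
    (H := polar.comp ⟨fun q : I × (ℝ × ℝ) => (q.1 * q.2.1, 1 + q.1 * (q.2.2 - 1)), by fun_prop⟩)
    (fun q => N.notMem_of_one_le ((N_polar _ _).symm ▸ le_max_left _ _))
    (f := .const _ x) (fun _ => by simp [hx])
  have A_R_one θ ρ : A (R (1, θ, ρ)) = polar (θ, ρ) := by simpa using A_R (1, θ, ρ)
  refine ⟨R.comp ⟨fun q => (1, q), by fun_prop⟩, fun θ ρ hρ => ?_, fun θ ρ _ => ?_⟩
  · exact (congrArg N (A_R_one θ ρ)).trans ((N_polar θ ρ).trans (max_eq_right hρ))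
  · exact (A_R_one θ ρ).symm ▸ (isArg_exp θ).ofReal_mul (radius_pos θ ρ)

end BranchedPower

/-! ### The tubes -/

section Tube

variable {n m : ℕ} (A : BranchedPower n) (B : BranchedPower m)

/-- The complement of the curve `A x = B y`. -/
abbrev CurveCompl : Type := {q : ℂ × ℂ // A q.1 ≠ B q.2}

/-- The points of the complement at which `B` does not vanish and `A / B` avoids the ray
`[1, ∞)`. -/
def tubeDomain : Set (CurveCompl A B) :=
  {z | B z.1.2 ≠ 0 ∧ ∀ c : ℝ, 1 ≤ c → A z.1.1 ≠ c * B z.1.2}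

/-- The points of `tubeDomain A B` together with an argument of the root of `B`. -/
abbrev Tube : Type := ArgCover (fun z : CurveCompl A B => B.root z.1.2) (tubeDomain A B)

variable {A B}

theorem joined_of_continuous {T : Type*} [TopologicalSpace T] {f : I → T} (hf : Continuous f) :
    Joined (f 0) (f 1) :=
  ⟨⟨⟨f, hf⟩, rfl, rfl⟩⟩

theorem BranchedPower.isArg_root_of_pos_scaling {y : I → ℂ} (hy : Continuous y) {c : I → ℝ}
    (hc : ∀ s, 0 < c s) (h : ∀ s, B (y s) = c s * B (y 0)) {b : ℝ} (h₀ : IsArg (B.root (y 0)) b)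
    (s : I) : IsArg (B.root (y s)) b := by
  refine isArg_of_isArg_pow (β := fun _ => b) (B.continuous_root.comp hy) continuous_const B.pos
    (fun s => ?_) h₀ s
  rw [Function.comp_apply, ← B.apply_eq, h, B.apply_eq]
  exact (h₀.pow m).ofReal_mul (hc s)

namespace Tube

theorem isArg (p : Tube A B) : IsArg (B p.1.1.1.2) (m * p.1.2) :=
  B.apply_eq _ ▸ p.2.2.pow m

/-- The point of the tube with coordinates `x` and `y` and argument `b`. -/
def mk (x y : ℂ) (b : ℝ) (hb : IsArg (B.root y) b) (h : ∀ c : ℝ, 1 ≤ c → A x ≠ c * B y) :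
    Tube A B :=
  ⟨(⟨(x, y), by simpa using h 1 le_rfl⟩, b), ⟨B.root_ne_zero.1 hb.1, h⟩, hb⟩

theorem continuous_mk {T : Type*} [TopologicalSpace T] {x y : T → ℂ} {b : T → ℝ}
    (hx : Continuous x) (hy : Continuous y) (hb : Continuous b)
    (hyb : ∀ t, IsArg (B.root (y t)) (b t)) (h : ∀ t, ∀ c : ℝ, 1 ≤ c → A (x t) ≠ c * B (y t)) :
    Continuous fun t => mk (x t) (y t) (b t) (hyb t) (h t) :=
  (((hx.prodMk hy).subtype_mk _).prodMk hb).subtype_mk _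

theorem continuous_val : Continuous fun q : Tube A B => q.1 :=
  ArgCover.continuous_val (K := fun z : CurveCompl A B => B.root z.1.2) (V := tubeDomain A B)

@[fun_prop]
theorem continuous_snd : Continuous fun q : Tube A B => q.1.1.1.2 :=
  continuous_val.fst.subtype_val.snd

variable (N : SeparatingGauge A.critValues B.critValues)

include N in
theorem exists_deformation :
    ∃ D : C(I × Tube A B, Tube A B), (∀ q, D (0, q) = q) ∧
      ∀ q, N (A (D (1, q)).1.1.1.1) ≤ 1 ∧ 2 ≤ N (B (D (1, q)).1.1.1.2) := by
  obtain ⟨R, R_zero, A_R, N_R, -⟩ := A.exists_push_in N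
  obtain ⟨O, O_zero, B_O, N_O⟩ := B.exists_push_out N
  let y (q : Tube A B) : {y // B y ≠ 0} := ⟨q.1.1.1.2, q.2.1.1⟩
  have cont_y : Continuous y := continuous_snd.subtype_mk _
  have isArg (s : I) (q : Tube A B) : IsArg (B.root (O (s, y q))) q.1.2 := by
    choose c one_le_c B_O using fun s => B_O s (y q)
    refine B.isArg_root_of_pos_scaling (y := fun s => O (s, y q)) (by fun_prop)
      (fun s => one_pos.trans_le (one_le_c s)) (fun s => ?_) ?_ s
    · rw [B_O, O_zero]
    · rw [O_zero]
      exact q.2.2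
  have off_ray (s : I) (q : Tube A B) (c : ℝ) (hc : 1 ≤ c) :
      A (R (s, q.1.1.1.1)) ≠ c * B (O (s, y q)) := by
    obtain ⟨a, ha, ha', A_R⟩ := A_R s q.1.1.1.1
    obtain ⟨b, hb, B_O⟩ := B_O s (y q)
    intro h
    refine q.2.1.2 (c * b / a) ((one_le_div ha).2 (by nlinarith)) ?_
    rw [A_R, B_O] at h
    have := Complex.ofReal_ne_zero.2 ha.ne'
    push_cast
    field_simp
    linear_combination h
  refine ⟨⟨fun p => mk (R (p.1, p.2.1.1.1.1)) (O (p.1, y p.2)) p.2.1.2 (isArg p.1 p.2)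
    (off_ray p.1 p.2), continuous_mk (by fun_prop) (by fun_prop) (by fun_prop) _ _⟩,
    fun q => ?_, fun q => ⟨N_R _, N_O _⟩⟩
  refine Subtype.ext (Prod.ext (Subtype.ext (Prod.ext (R_zero _) (O_zero _))) rfl)

include N in
theorem pathConnectedSpace : PathConnectedSpace (Tube A B) := by
  obtain ⟨R, -, -, N_R, R_const⟩ := A.exists_push_in N
  obtain ⟨D, D_zero, hD⟩ := exists_deformation N
  obtain ⟨x₀, hx₀⟩ := A.surjective 0
  have connected := B.pathConnectedSpace
  let section₀ (p : ArgSpace B.root) : Tube A B :=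
    mk x₀ p.1.1 p.1.2 p.2 fun c hc => by
      rw [hx₀]
      exact (mul_ne_zero (by exact_mod_cast (one_pos.trans_le hc).ne')
        (B.root_ne_zero.1 p.2.1)).symm
  have cont_section₀ : Continuous section₀ :=
    continuous_mk (by fun_prop) (by fun_prop) (by fun_prop) _ _
  have joined_section₀ (q : Tube A B) (h₁ : N (A q.1.1.1.1) ≤ 1) (h₂ : 2 ≤ N (B q.1.1.1.2)) :
      Joined q (section₀ ⟨(q.1.1.1.2, q.1.2), q.2.2⟩) := by
    have cont : Continuous fun s : I => R (1, AffineMap.lineMap q.1.1.1.1 x₀ (s : ℂ)) := by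
      simp only [AffineMap.lineMap_apply]
      fun_prop
    convert joined_of_continuous (continuous_mk (B := B) cont continuous_const continuous_const
      (fun _ => q.2.2)
      fun s c hc => N.ne_mul_of_lt ((N_R _).trans_lt (one_lt_two.trans_le h₂)) c hc) using 1
    · refine Subtype.ext (Prod.ext (Subtype.ext (Prod.ext ?_ rfl)) rfl)
      simp [mk, R_const _ h₁]
    · refine Subtype.ext (Prod.ext (Subtype.ext (Prod.ext ?_ rfl)) rfl)
      simp [section₀, mk, R_const x₀ (by simp [hx₀])]
  have joined (q : Tube A B) : ∃ p, Joined q (section₀ p) := by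
    refine ⟨_, .trans ?_ (joined_section₀ (D (1, q)) (hD q).1 (hD q).2)⟩
    simpa [D_zero] using joined_of_continuous (f := fun s => D (s, q)) (by fun_prop)
  refine ⟨connected.nonempty.map section₀, fun q q' => ?_⟩
  obtain ⟨p, hp⟩ := joined q
  obtain ⟨p', hp'⟩ := joined q'
  exact hp.trans (((connected.joined p p').map cont_section₀).trans hp'.symm)

end Tube

section NullHomotopy

open ContinuousMap

variable {T : Type*} [TopologicalSpace T]

variable (A B) in
/-- The map avoids the curve `A x = B y`. -/
def AvoidsCurve (u : C(T, ℂ × ℂ)) : Prop := ∀ t, A (u t).1 ≠ B (u t).2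

theorem homotopicWith_avoidsCurve {u v : C(T, ℂ × ℂ)} (F : C(I × T, ℂ × ℂ))
    (hF : ∀ q, A (F q).1 ≠ B (F q).2) (h₀ : ∀ t, F (0, t) = u t) (h₁ : ∀ t, F (1, t) = v t) :
    HomotopicWith u v (AvoidsCurve A B) :=
  ⟨⟨⟨F, h₀, h₁⟩, fun _ _ => hF _⟩⟩

theorem nullhomotopic_of_homotopicWith_const {u : C(T, CurveCompl A B)} {c : ℂ × ℂ} [Nonempty T]
    (h : HomotopicWith ((⟨Subtype.val, by fun_prop⟩ : C(CurveCompl A B, ℂ × ℂ)).comp u) (const T c)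
      (AvoidsCurve A B)) : u.Nullhomotopic := by
  obtain ⟨F, avoids⟩ := h
  have hF (q) : A (F q).1 ≠ B (F q).2 := avoids q.1 q.2
  have hc : A c.1 ≠ B c.2 := by simpa using hF (1, Classical.arbitrary T)
  exact ⟨⟨c, hc⟩, ⟨⟨⟨fun q => ⟨F q, hF q⟩, F.continuous.subtype_mk _⟩,
    fun t => Subtype.ext (F.map_zero_left t), fun t => Subtype.ext (F.map_one_left t)⟩⟩⟩

theorem IsArg.ne_of_add_pi {u v : ℂ} {θ : ℝ} (hu : IsArg u (θ + Real.pi)) (hv : IsArg v θ) :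
    u ≠ v := by
  rintro rfl
  obtain ⟨k, hk⟩ := hv.exists_eq_add hu
  have : (1 : ℝ) = 2 * k := mul_left_cancel₀ Real.pi_ne_zero (by linarith)
  have : (1 : ℤ) = 2 * k := by exact_mod_cast this
  omega

variable (N : SeparatingGauge A.critValues B.critValues)

theorem exists_gauge_bound (y : C(T, ℂ)) :
    ∃ ρ : C(T, ℝ), ∀ t, 1 ≤ ρ t ∧ ∀ s : I, N (B ((1 - (s : ℂ)) * y t)) < ρ t := by
  let g (t : T) (s : I) : ℝ := N (B ((1 - (s : ℂ)) * y t))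
  have cont : Continuous ↿g := by
    change Continuous fun p : T × I => N (B ((1 - (p.2 : ℂ)) * y p.1))
    fun_prop
  have lt (t : T) (s : I) : g t s < 1 + sSup (g t '' univ) := by
    have bdd : BddAbove (g t '' univ) :=
      (isCompact_univ.image (cont.comp (Continuous.prodMk_right t))).bddAbove
    linarith [le_csSup bdd (mem_image_of_mem _ (mem_univ s))]
  refine ⟨⟨fun t => 1 + sSup (g t '' univ),
    continuous_const.add (isCompact_univ.continuous_sSup cont)⟩, fun t => ⟨?_, lt t⟩⟩
  have bdd : BddAbove (g t '' univ) :=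
    (isCompact_univ.image (cont.comp (Continuous.prodMk_right t))).bddAbove
  have := le_csSup bdd (mem_image_of_mem (g t) (mem_univ 0))
  change 1 ≤ 1 + sSup (g t '' univ)
  linarith [N.nonneg (B ((1 - ((0 : I) : ℂ)) * y t))]

theorem homotopicWith_of_gauge_le {x x' y : C(T, ℂ)} (hx : ∀ t, N (A (x t)) ≤ 1)
    (hx' : ∀ t, N (A (x' t)) ≤ 1) (hy : ∀ t, 2 ≤ N (B (y t))) :
    HomotopicWith (x.prodMk y) (x'.prodMk y) (AvoidsCurve A B) := by
  obtain ⟨R, -, -, N_R, R_const⟩ := A.exists_push_in N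
  refine homotopicWith_avoidsCurve
    ⟨fun p => (R (1, (1 - (p.1 : ℂ)) * x p.2 + p.1 * x' p.2), y p.2), by fun_prop⟩
    (fun p h => ?_) (fun t => ?_) (fun t => ?_)
  · have h : A (R (1, (1 - (p.1 : ℂ)) * x p.2 + p.1 * x' p.2)) = B (y p.2) := h
    linarith [N_R ((1 - (p.1 : ℂ)) * x p.2 + p.1 * x' p.2), hy p.2, congrArg N h]
  · simp [R_const _ (hx t)]
  · simp [R_const _ (hx' t)]

/-- Move `A x` along the gauge sphere to the direction opposite to `B y`, then outwards until `y`
can be contracted to `0`. -/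
theorem exists_homotopicWith_const {x y : C(T, ℂ)} {b : C(T, ℝ)} (hx : ∀ t, N (A (x t)) ≤ 1)
    (hy : ∀ t, 2 ≤ N (B (y t))) (hb : ∀ t, IsArg (B (y t)) (b t)) :
    ∃ c, HomotopicWith (x.prodMk y) (const T c) (AvoidsCurve A B) := by
  obtain ⟨Ξ, N_Ξ, isArg_Ξ⟩ := A.exists_polar_lift N
  obtain ⟨ρ, hρ⟩ := exists_gauge_bound N y
  let x₁ : C(T, ℂ) := ⟨fun t => Ξ (b t + Real.pi, 1), by fun_prop⟩
  let x₂ : C(T, ℂ) := ⟨fun t => Ξ (b t + Real.pi, ρ t), by fun_prop⟩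
  let c : ℂ × ℂ := (Ξ (0, 1 + N (B 0)), 0)
  have rotate : HomotopicWith (x.prodMk y) (x₁.prodMk y) (AvoidsCurve A B) :=
    homotopicWith_of_gauge_le N hx (fun t => (N_Ξ _ 1 le_rfl).le) hy
  have enlarge : HomotopicWith (x₁.prodMk y) (x₂.prodMk y) (AvoidsCurve A B) := by
    refine homotopicWith_avoidsCurve
      ⟨fun p => (Ξ (b p.2 + Real.pi, 1 + p.1 * (ρ p.2 - 1)), y p.2), by fun_prop⟩
      (fun p => (isArg_Ξ _ _ ?_).ne_of_add_pi (hb p.2)) (fun t => by simp [x₁])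
      (fun t => by simp [x₂])
    nlinarith [p.1.2.1, (hρ p.2).1]
  have contract : HomotopicWith (x₂.prodMk y) (x₂.prodMk (const T 0)) (AvoidsCurve A B) := by
    refine homotopicWith_avoidsCurve
      ⟨fun p => (x₂ p.2, (1 - (p.1 : ℂ)) * y p.2), by fun_prop⟩
      (fun p h => ((hρ p.2).2 p.1).ne ?_) (fun t => by simp) (fun t => by simp)
    rw [← N_Ξ (b p.2 + Real.pi) _ (hρ p.2).1]
    exact (congrArg N h).symm
  have recenter : HomotopicWith (x₂.prodMk (const T 0)) (const T c) (AvoidsCurve A B) := by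
    refine homotopicWith_avoidsCurve
      ⟨fun p => (Ξ ((1 - p.1) * (b p.2 + Real.pi), (1 - p.1) * ρ p.2 + p.1 * (1 + N (B 0))), 0),
        by fun_prop⟩
      (fun p h => ?_) (fun t => by simp [x₂]) (fun t => by simp [c])
    have bound : N (B 0) < ρ p.2 := by simpa using (hρ p.2).2 1
    have lt : N (B 0) < (1 - p.1) * ρ p.2 + p.1 * (1 + N (B 0)) := by
      obtain s_eq | s_pos := p.1.2.1.eq_or_lt
      · simpa [← s_eq] using bound
      · nlinarith [p.1.2.2]
    have one_le : 1 ≤ (1 - (p.1 : ℝ)) * ρ p.2 + p.1 * (1 + N (B 0)) := by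
      nlinarith [p.1.2.1, p.1.2.2, (hρ p.2).1, N.nonneg (B 0)]
    exact lt.ne ((congrArg N h).symm.trans (N_Ξ _ _ one_le))
  exact ⟨c, rotate.trans (enlarge.trans (contract.trans recenter))⟩

include N in
theorem Tube.nullhomotopic :
    (ArgCover.phasedMap (fun z : CurveCompl A B => B.root z.1.2)
      (tubeDomain A B)).proj.Nullhomotopic := by
  obtain ⟨D, D_zero, hD⟩ := Tube.exists_deformation N
  have := (Tube.pathConnectedSpace N).nonempty
  let proj : C(Tube A B, ℂ × ℂ) := ⟨fun q => q.1.1.1, by fun_prop⟩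
  let D₁ : C(Tube A B, Tube A B) := D.comp ⟨fun q => (1, q), by fun_prop⟩
  obtain ⟨c, hc⟩ := exists_homotopicWith_const N (x := ⟨fun q => (D₁ q).1.1.1.1, by fun_prop⟩)
    (y := ⟨fun q => (D₁ q).1.1.1.2, by fun_prop⟩) (b := ⟨fun q => m * (D₁ q).1.2, by fun_prop⟩)
    (fun q => (hD q).1) (fun q => (hD q).2)
    fun q => Tube.isArg (D₁ q)
  have deform : HomotopicWith proj (proj.comp D₁) (AvoidsCurve A B) :=
    homotopicWith_avoidsCurve (proj.comp D) (fun p => (D p).1.1.2)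
      (fun q => congrArg proj (D_zero q)) fun _ => rfl
  exact nullhomotopic_of_homotopicWith_const (deform.trans hc)

end NullHomotopy

end Tube

/-! ### The levels of the overlap -/

section ArgStrip

variable {n m : ℕ} {A : BranchedPower n} {B : BranchedPower m} {D : Set ℝ}

/-- The value `B y` has no critical value on its circle around `0`. -/
def BranchedPower.IsGeneric (B : BranchedPower m) (y : ℂ) : Prop := ∀ c ∈ B.critValues, ‖B y‖ ≠ ‖c‖

theorem BranchedPower.IsGeneric.exists_circular_lift {y : ℂ} {b : ℝ} (hy : B.IsGeneric y)
    (hb : IsArg (B.root y) b) :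
    ∃ Ξ : C(ℝ, ℂ), Ξ b = y ∧ ∀ t, IsArg (B.root (Ξ t)) t := by
  let rotated : C(I × ℝ, ℂ) :=
    ⟨fun q => B y * Complex.exp ((m * q.1 * (q.2 - b) : ℝ) * Complex.I), by fun_prop⟩
  have norm_rotated (q) : ‖rotated q‖ = ‖B y‖ := by
    change ‖B y * _‖ = _
    rw [norm_mul, Complex.norm_exp_ofReal_mul_I, mul_one]
  obtain ⟨R, B_R, -, R_const⟩ := exists_homotopy_lift B.isCoveringMapOn (H := rotated)
    (f := .const _ y) (fun q => by
      rintro (h | h)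
      · exact hy _ h (norm_rotated q).symm
      · exact B.root_ne_zero.1 hb.1 (norm_eq_zero.1 (by rw [← norm_rotated q, h, norm_zero])))
    (fun t => by simp [rotated])
  have R_b : R (1, b) = y := R_const b (fun t => by simp [rotated]) 1
  refine ⟨R.comp ⟨fun t => (1, t), by fun_prop⟩, R_b, fun t => ?_⟩
  refine isArg_of_isArg_pow (κ := fun t => B.root (R (1, t))) (β := id)
    (B.continuous_root.comp (by fun_prop)) continuous_id B.pos (fun t => ?_) (t₀ := b)
    (by simpa [R_b] using hb) t
  have isArg_y : IsArg (B y) (m * b) := B.apply_eq y ▸ hb.pow m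
  rw [← B.apply_eq, B_R]
  convert isArg_y.mul (isArg_exp (m * (t - b))) using 1
  · simp [rotated]
  · simp only [id]
    ring

theorem BranchedPower.exists_isGeneric (B : BranchedPower m) {U : Set ℂ} (hU : IsOpen U) {y : ℂ}
    (hy : y ∈ U) (ne_zero : B y ≠ 0) : ∃ y' ∈ U, B.IsGeneric y' := by
  have scaled : ∀ᶠ r : ℝ in 𝓝[>] 1, (r : ℂ) * B y ∈ B '' U := by
    have cont : Continuous fun r : ℝ => (r : ℂ) * B y := by fun_prop
    exact nhdsWithin_le_nhds
      (((B.isOpenMap U hU).preimage cont).mem_nhds ⟨y, hy, by simp⟩)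
  have avoids : ∀ᶠ r : ℝ in 𝓝[>] 1, r ∉ (fun c : ℂ => ‖c‖ / ‖B y‖) '' B.critValues := by
    have finite := B.finite_critValues.image fun c : ℂ => ‖c‖ / ‖B y‖
    exact nhdsGT_le_nhdsNE 1 (nhdsNE_le_cofinite 1 finite.compl_mem_cofinite)
  obtain ⟨r, ⟨⟨y', hy', B_y'⟩, hr⟩, one_lt⟩ :=
    ((scaled.and avoids).and self_mem_nhdsWithin).exists
  refine ⟨y', hy', fun c hc h => hr ⟨c, hc, ?_⟩⟩
  have norm_pos := norm_pos_iff.2 ne_zero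
  beta_reduce
  rw [div_eq_iff norm_pos.ne', ← h, B_y', norm_mul, Complex.norm_real,
    Real.norm_of_nonneg (zero_le_one.trans (le_of_lt one_lt))]

variable (A B D) in
/-- The points `x`, `y` with arguments `a`, `b` of the roots of `A x`, `B y` such that the
difference `n * a - m * b` of arguments of `A x` and `B y` lies in `D`. -/
def argStrip : Set ((ℂ × ℝ) × (ℂ × ℝ)) :=
  {q | IsArg (A.root q.1.1) q.1.2 ∧ IsArg (B.root q.2.1) q.2.2 ∧ n * q.1.2 - m * q.2.2 ∈ D}

theorem swap_mem_argStrip {q : (ℂ × ℝ) × (ℂ × ℝ)} (h : q ∈ argStrip A B D) :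
    q.swap ∈ argStrip B A (-D) :=
  ⟨h.2.1, h.1, by simpa using h.2.2⟩

theorem joinedIn_argStrip_swap {p q : (ℂ × ℝ) × (ℂ × ℝ)} (h : JoinedIn (argStrip A B D) p q) :
    JoinedIn (argStrip B A (-D)) p.swap q.swap :=
  let ⟨γ, hγ⟩ := h
  ⟨γ.map continuous_swap, fun t => swap_mem_argStrip (hγ t)⟩

theorem joinedIn_argStrip_of_lift (hD : Convex ℝ D) {Ξ : C(ℝ, ℂ)}
    (hΞ : ∀ t, IsArg (B.root (Ξ t)) t) {x x' : ℂ} {a a' b b' : ℝ}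
    (h : ((x, a), (Ξ b, b)) ∈ argStrip A B D) (h' : ((x', a'), (Ξ b', b')) ∈ argStrip A B D) :
    JoinedIn (argStrip A B D) ((x, a), (Ξ b, b)) ((x', a'), (Ξ b', b')) := by
  have m_pos : (0 : ℝ) < m := by exact_mod_cast B.pos
  obtain ⟨δ⟩ := A.pathConnectedSpace.joined ⟨(x, a), h.1⟩ ⟨(x', a'), h'.1⟩
  let β (t : I) : ℝ :=
    (n * (δ t).1.2 - ((1 - t) * (n * a - m * b) + t * (n * a' - m * b'))) / m
  have diff_β (t : I) : n * (δ t).1.2 - m * β t =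
      (1 - t) * (n * a - m * b) + t * (n * a' - m * b') := by
    simp only [β]
    field_simp
    ring
  have β_zero : β 0 = b := by simp [β, m_pos.ne']
  have β_one : β 1 = b' := by simp [β, m_pos.ne']
  refine ⟨⟨⟨fun t => ((δ t).1, (Ξ (β t), β t)), by fun_prop⟩, by simp [β_zero], by simp [β_one]⟩,
    fun t => ⟨(δ t).2, hΞ _, ?_⟩⟩
  change n * (δ t).1.2 - m * β t ∈ D
  rw [diff_β]
  exact hD h.2.2 h'.2.2 (sub_nonneg.2 t.2.2) t.2.1 (by ring)

theorem exists_joinedIn_argStrip_isGeneric (hD : IsOpen D) {p : ℂ × ℝ} {y : ℂ} {b : ℝ}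
    (h : (p, (y, b)) ∈ argStrip A B D) :
    ∃ y' b', JoinedIn (argStrip A B D) (p, (y, b)) (p, (y', b')) ∧ B.IsGeneric y' := by
  obtain ⟨h₁, h₂, h₃⟩ := h
  obtain ⟨U, hU, hyU, β, cont_β, β_y, hβ⟩ := exists_continuousOn_isArg B.continuous_root h₂
  have near : U ∩ β ⁻¹' {t | n * p.2 - m * t ∈ D} ∈ 𝓝 y := by
    refine (cont_β.isOpen_inter_preimage hU (hD.preimage (by fun_prop))).mem_nhds ⟨hyU, ?_⟩
    simpa [β_y] using h₃
  obtain ⟨ε, hε, ball_subset⟩ := Metric.mem_nhds_iff.1 near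
  obtain ⟨y', hy', generic⟩ := B.exists_isGeneric Metric.isOpen_ball (Metric.mem_ball_self hε)
    (B.root_ne_zero.1 h₂.1)
  have joined : JoinedIn (Metric.ball y ε) y y' :=
    ((convex_ball y ε).isPathConnected ⟨y, Metric.mem_ball_self hε⟩).joinedIn _
      (Metric.mem_ball_self hε) _ hy'
  refine ⟨y', β y', ?_, generic⟩
  convert joined.map_continuousOn (f := fun z => (p, (z, β z))) ?_ |>.mono ?_ using 1
  · rw [β_y]
  · exact continuousOn_const.prodMk
      (continuousOn_id.prodMk (cont_β.mono fun z hz => (ball_subset hz).1))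
  · rintro _ ⟨z, hz, rfl⟩
    exact ⟨h₁, hβ z (ball_subset hz).1, (ball_subset hz).2⟩

theorem argStrip_nonempty (hD : D.Nonempty) : (argStrip A B D).Nonempty := by
  have m_pos : (0 : ℝ) < m := by exact_mod_cast B.pos
  obtain ⟨d, hd⟩ := hD
  obtain ⟨⟨⟨x, a⟩, ha⟩⟩ := A.pathConnectedSpace.nonempty
  obtain ⟨y₀, hy₀⟩ := B.surjective 1
  obtain ⟨y, hy, generic⟩ := B.exists_isGeneric (U := {z | B z ≠ 0})
    (isOpen_ne_fun B.continuous continuous_const) (y := y₀) (by simp [hy₀]) (by simp [hy₀])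
  obtain ⟨Ξ, -, hΞ⟩ := generic.exists_circular_lift (isArg_arg (B.root_ne_zero.2 hy))
  refine ⟨((x, a), (Ξ ((n * a - d) / m), (n * a - d) / m)), ha, hΞ _, ?_⟩
  simpa [mul_div_cancel₀ _ m_pos.ne'] using hd

theorem isPathConnected_argStrip (hD : IsOpen D) (convex : Convex ℝ D) (nonempty : D.Nonempty) :
    IsPathConnected (argStrip A B D) := by
  refine isPathConnected_iff.2 ⟨argStrip_nonempty nonempty, ?_⟩
  rintro ⟨⟨x, a⟩, ⟨y, b⟩⟩ hp ⟨⟨x', a'⟩, ⟨y', b'⟩⟩ hq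
  obtain ⟨y₁, b₁, joined₁, generic_y₁⟩ := exists_joinedIn_argStrip_isGeneric hD hp
  obtain ⟨x₂, a₂, joined₂, generic_x₂⟩ :=
    exists_joinedIn_argStrip_isGeneric hD.neg (swap_mem_argStrip hq)
  replace joined₂ : JoinedIn (argStrip A B D) ((x', a'), (y', b')) ((x₂, a₂), (y', b')) := by
    simpa using joinedIn_argStrip_swap joined₂
  have mem₁ := joined₁.mem.2
  have mem₂ := joined₂.mem.2
  obtain ⟨Ξ, Ξ_b₁, hΞ⟩ := generic_y₁.exists_circular_lift (b := b₁) mem₁.2.1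
  obtain ⟨Θ, Θ_a₂, hΘ⟩ := generic_x₂.exists_circular_lift (b := a₂) mem₂.1
  subst Ξ_b₁ Θ_a₂
  have mem₃ : ((Θ a₂, a₂), (Ξ b', b')) ∈ argStrip A B D := ⟨mem₂.1, hΞ b', mem₂.2.2⟩
  have joined₃ := joinedIn_argStrip_of_lift convex hΞ mem₁ mem₃
  have joined₄ := joinedIn_argStrip_swap (joinedIn_argStrip_of_lift convex.neg hΘ
    (swap_mem_argStrip mem₃) (swap_mem_argStrip mem₂))
  rw [neg_neg] at joined₄
  exact joined₁.trans (joined₃.trans (joined₄.trans joined₂.symm))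

end ArgStrip

section Sheets

variable {n m : ℕ} (A : BranchedPower n) (B : BranchedPower m)

/-- Exchange of the two coordinates. -/
def CurveCompl.swap : CurveCompl A B ≃ₜ CurveCompl B A where
  toFun z := ⟨z.1.swap, z.2.symm⟩
  invFun z := ⟨z.1.swap, z.2.symm⟩
  continuous_toFun := (continuous_swap.comp continuous_subtype_val).subtype_mk _
  continuous_invFun := (continuous_swap.comp continuous_subtype_val).subtype_mk _

/-- The sheet on which `B` does not vanish, with the argument of its root as phase. -/
noncomputable def leftSheet : PhasedMap (Tube A B) (CurveCompl A B) :=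
  ArgCover.phasedMap (fun z : CurveCompl A B => B.root z.1.2) (tubeDomain A B)

/-- The sheet on which `A` does not vanish, with the argument of its root as phase. -/
noncomputable def rightSheet : PhasedMap (Tube B A) (CurveCompl A B) :=
  (leftSheet B A).postcomp (CurveCompl.swap B A)

variable {A B}

theorem IsArg.ne_ofReal_mul {u v : ℂ} {θ φ : ℝ} (hu : IsArg u θ) (hv : IsArg v φ)
    (h : ∀ l : ℤ, θ - φ ≠ 2 * Real.pi * l) {c : ℝ} (hc : 0 < c) : u ≠ c * v := by
  rintro rfl
  obtain ⟨l, hl⟩ := (hv.ofReal_mul hc).exists_eq_add hu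
  exact h l (by linarith)

theorem isOpen_tubeDomain : IsOpen (tubeDomain A B) := by
  have closed_ray : IsClosed ((fun c : ℝ => (c : ℂ)) '' Ici 1) :=
    Complex.isometry_ofReal.isClosedEmbedding.isClosedMap _ isClosed_Ici
  have isOpen_ne : IsOpen {z : CurveCompl A B | B z.1.2 ≠ 0} :=
    isOpen_ne_fun (by fun_prop) continuous_const
  have cont : ContinuousOn (fun z : CurveCompl A B => A z.1.1 / B z.1.2) {z | B z.1.2 ≠ 0} :=
    ContinuousOn.div (by fun_prop) (by fun_prop) fun z hz => hz
  convert cont.isOpen_inter_preimage isOpen_ne closed_ray.isOpen_compl using 1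
  ext z
  refine and_congr_right fun hz => ?_
  simp [eq_comm (b := A z.1.1 / B z.1.2), div_eq_iff hz]

theorem mem_tubeDomain_or_swap_mem (z : CurveCompl A B) :
    z ∈ tubeDomain A B ∨ CurveCompl.swap A B z ∈ tubeDomain B A := by
  by_contra! h
  obtain ⟨⟨x, y⟩, hz : A x ≠ B y⟩ := z
  obtain ⟨hB, hA⟩ : ¬(B y ≠ 0 ∧ ∀ c : ℝ, 1 ≤ c → A x ≠ c * B y) ∧
    ¬(A x ≠ 0 ∧ ∀ c : ℝ, 1 ≤ c → B y ≠ c * A x) := h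
  have B_ne_zero : B y ≠ 0 := by
    intro h₀
    refine hA ⟨fun h => hz (h.trans h₀.symm), fun c hc h => ?_⟩
    rw [h₀, zero_eq_mul] at h
    exact h.elim (by exact_mod_cast (one_pos.trans_le hc).ne') fun h => hz (h.trans h₀.symm)
  obtain ⟨c, hc, hxy⟩ : ∃ c : ℝ, 1 ≤ c ∧ A x = c * B y := by simpa [B_ne_zero] using hB
  have A_ne_zero : A x ≠ 0 :=
    hxy ▸ mul_ne_zero (by exact_mod_cast (one_pos.trans_le hc).ne') B_ne_zero
  obtain ⟨c', hc', hyx⟩ : ∃ c : ℝ, 1 ≤ c ∧ B y = c * A x := by simpa [A_ne_zero] using hA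
  have mul_eq_one : c * c' = 1 := by
    have : (c * c' : ℂ) = 1 := mul_right_cancel₀ A_ne_zero <| by
      rw [mul_assoc, ← hyx, ← hxy, one_mul]
    exact_mod_cast this
  have : c = 1 := by nlinarith
  exact hz (by simpa [this] using hxy)

theorem IsArg.exists_pos_eq_mul {u v : ℂ} {θ : ℝ} (hu : IsArg u θ) (hv : IsArg v θ) :
    ∃ c : ℝ, 0 < c ∧ u = c * v := by
  have norm_v := norm_pos_iff.2 hv.1
  refine ⟨‖u‖ / ‖v‖, div_pos (norm_pos_iff.2 hu.1) norm_v, ?_⟩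
  have norm_v_ne : (‖v‖ : ℂ) ≠ 0 := by exact_mod_cast norm_v.ne'
  rw [Complex.ofReal_div, div_mul_eq_mul_div, eq_div_iff norm_v_ne]
  linear_combination (-‖v‖ : ℂ) * hu.norm_mul_exp + (‖u‖ : ℂ) * hv.norm_mul_exp

theorem proj_sheets_eq_iff {p : Tube A B} {q : Tube B A} :
    (leftSheet A B).proj p = (rightSheet A B).proj q ↔ q.1.1.1 = p.1.1.1.swap :=
  Subtype.ext_iff.trans (eq_comm.trans Prod.swap_eq_iff_eq_swap)

theorem phase_sheets (p : Tube A B) (q : Tube B A) :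
    n * (rightSheet A B).phase q - m * (leftSheet A B).phase p =
      (n * q.1.2 - m * p.1.2) / (2 * Real.pi) := by
  change n * (q.1.2 / (2 * Real.pi)) - m * (p.1.2 / (2 * Real.pi)) = _
  ring

theorem levelSeparated_sheets : LevelSeparated (leftSheet A B) (rightSheet A B) m n := by
  intro p q hpq l hl
  rw [proj_sheets_eq_iff] at hpq
  rw [phase_sheets, div_eq_iff Real.two_pi_pos.ne'] at hl
  have isArg_A : IsArg (A p.1.1.1.1) (m * p.1.2) := by
    have shift : m * p.1.2 = n * q.1.2 + 2 * Real.pi * (-l : ℤ) := by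
      push_cast
      linarith
    have isArg_A := (Tube.isArg q).add_two_pi_mul (-l)
    rwa [hpq, ← shift] at isArg_A
  obtain ⟨c, c_pos, hc⟩ := isArg_A.exists_pos_eq_mul (Tube.isArg p)
  obtain one_le | le_one := le_total 1 c
  · exact p.2.1.2 c one_le hc
  · refine q.2.1.2 c⁻¹ ((one_le_inv₀ c_pos).2 le_one) ?_
    have c_ne : (c : ℂ) ≠ 0 := by exact_mod_cast c_pos.ne'
    rw [hpq, Prod.fst_swap, Prod.snd_swap, hc]
    push_cast
    field_simp

theorem isLocallySplit_sheets : IsLocallySplit (sumProj (leftSheet A B) (rightSheet A B)) := by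
  intro z
  have hA := A.continuous_root
  have hB := B.continuous_root
  obtain hz | hz := mem_tubeDomain_or_swap_mem z
  · exact LocalSection.exists_comp (i := Sum.inl) continuous_inl (fun _ => rfl)
      (ArgCover.exists_localSection (by fun_prop) isOpen_tubeDomain hz (B.root_ne_zero.2 hz.1))
  · obtain ⟨S, hS⟩ : ∃ S : LocalSection (leftSheet B A).proj, CurveCompl.swap A B z ∈ S.base :=
      ArgCover.exists_localSection (by fun_prop) isOpen_tubeDomain hz (A.root_ne_zero.2 hz.1)
    exact ⟨⟨CurveCompl.swap A B ⁻¹' S.base,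
      S.isOpen_base.preimage (CurveCompl.swap A B).continuous,
      fun w => .inr (S.toFun (CurveCompl.swap A B w)),
      continuous_inr.comp_continuousOn (S.continuousOn.comp
        (CurveCompl.swap A B).continuous.continuousOn (mapsTo_preimage _ _)),
      fun w hw => congrArg (CurveCompl.swap B A) (S.proj_apply _ hw)⟩, hS⟩

theorem level_sheets_eq_iff {p : Tube A B} {q : Tube B A}
    (h : (leftSheet A B).proj p = (rightSheet A B).proj q) {l : ℤ} :
    level (leftSheet A B) (rightSheet A B) m n p q = l ↔
      n * q.1.2 - m * p.1.2 ∈ Ioo (2 * Real.pi * l) (2 * Real.pi * (l + 1)) := by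
  have separated := levelSeparated_sheets p q h l
  rw [level, Int.floor_eq_iff, le_iff_lt_or_eq, or_iff_left separated.symm, phase_sheets,
    lt_div_iff₀' Real.two_pi_pos, div_lt_iff₀' Real.two_pi_pos]
  rfl

theorem ne_mul_of_mem_argStrip {q : (ℂ × ℝ) × (ℂ × ℝ)} {l : ℤ}
    (hq : q ∈ argStrip A B (Ioo (2 * Real.pi * l) (2 * Real.pi * (l + 1)))) {c : ℝ} (hc : 0 < c) :
    A q.1.1 ≠ c * B q.2.1 := by
  obtain ⟨ha, hb, lower, upper⟩ := hq
  rw [A.apply_eq, B.apply_eq]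
  refine (ha.pow n).ne_ofReal_mul (hb.pow m) (fun k hk => ?_) hc
  rw [hk, mul_lt_mul_iff_right₀ Real.two_pi_pos] at lower upper
  have : l < k := by exact_mod_cast lower
  have : k < l + 1 := by exact_mod_cast upper
  omega

theorem isPathConnected_levelSet_sheets (l : ℤ) :
    IsPathConnected (levelSet (leftSheet A B) (rightSheet A B) m n l) := by
  let M := argStrip A B (Ioo (2 * Real.pi * l) (2 * Real.pi * (l + 1)))
  have : PathConnectedSpace M := isPathConnected_iff_pathConnectedSpace.1
    (isPathConnected_argStrip isOpen_Ioo (convex_Ioo _ _)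
      (nonempty_Ioo.2 (by linarith [Real.pi_pos])))
  have ne_mul (q : M) (c : ℝ) (hc : 1 ≤ c) := ne_mul_of_mem_argStrip q.2 (one_pos.trans_le hc)
  have ne_mul_swap (q : M) (c : ℝ) (hc : 1 ≤ c) : B q.1.2.1 ≠ c * A q.1.1.1 := by
    have c_ne : (c : ℂ) ≠ 0 := by exact_mod_cast (one_pos.trans_le hc).ne'
    intro h
    refine ne_mul_of_mem_argStrip q.2 (inv_pos.2 (one_pos.trans_le hc)) ?_
    rw [h]
    push_cast
    field_simp
  let toLevelSet (q : M) : Tube A B × Tube B A :=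
    (.mk q.1.1.1 q.1.2.1 q.1.2.2 q.2.2.1 (ne_mul q),
      .mk q.1.2.1 q.1.1.1 q.1.1.2 q.2.1 (ne_mul_swap q))
  have cont : Continuous toLevelSet :=
    (Tube.continuous_mk (by fun_prop) (by fun_prop) (by fun_prop) _ _).prodMk
      (Tube.continuous_mk (by fun_prop) (by fun_prop) (by fun_prop) _ _)
  convert isPathConnected_range cont using 1
  ext ⟨p, q⟩
  constructor
  · rintro ⟨hpq, hl⟩
    have hl := (level_sheets_eq_iff hpq).1 hl
    rw [proj_sheets_eq_iff] at hpq
    have root_q := q.2.2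
    beta_reduce at root_q
    rw [hpq] at root_q
    refine ⟨⟨((p.1.1.1.1, q.1.2), (p.1.1.1.2, p.1.2)), root_q, p.2.2, hl⟩, ?_⟩
    exact Prod.ext rfl (Subtype.ext (Prod.ext (Subtype.ext hpq.symm) rfl))
  · rintro ⟨r, hr⟩
    obtain ⟨rfl, rfl⟩ := Prod.ext_iff.1 hr
    exact ⟨rfl, (level_sheets_eq_iff rfl).2 r.2.2.2⟩

theorem isTwoSheetedCover_sheets (N : SeparatingGauge A.critValues B.critValues)
    (N' : SeparatingGauge B.critValues A.critValues) :
    IsTwoSheetedCover (leftSheet A B) (rightSheet A B) m n where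
  isLocallySplit := isLocallySplit_sheets
  left_connected := Tube.pathConnectedSpace N
  right_connected := Tube.pathConnectedSpace N'
  left_parallel := .of_nullhomotopic (Tube.nullhomotopic N)
  right_parallel := .of_nullhomotopic ((Tube.nullhomotopic N').comp_right _)
  levelSeparated := levelSeparated_sheets
  isPathConnected_levelSet := isPathConnected_levelSet_sheets

end Sheets

/-! ### Separating gauges -/

section Gauges

theorem exists_homogeneous_separating {E : Type*} [NormedAddCommGroup E] [NormedSpace ℝ E]
    {s t : Set E} (hs : s.Finite) (ht : 0 ∉ t)
    (hst : ∀ a ∈ s, ∀ b ∈ t, ¬ SameRay ℝ a b) :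
    ∃ N : E → ℝ, Continuous N ∧ (∀ (c : ℝ) (u : E), 0 ≤ c → N (c • u) = c * N u) ∧
      (∀ u, 0 ≤ N u) ∧ (∀ a ∈ s, N a = 0) ∧ ∀ b ∈ t, 0 < N b := by
  induction s, hs using Set.Finite.induction_on with
  | empty =>
    refine ⟨norm, continuous_norm, fun c u hc => ?_, norm_nonneg, by simp, fun b hb => ?_⟩
    · rw [norm_smul, Real.norm_of_nonneg hc]
    · exact norm_pos_iff.2 (ne_of_mem_of_not_mem hb ht)
  | @insert a s _ _ ih =>
    obtain ⟨N, cont, smul, nonneg, zero, pos⟩ := ih fun a' ha' => hst a' (mem_insert_of_mem a ha')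
    refine ⟨fun u => min (N u) ‖‖a‖ • u - ‖u‖ • a‖, by fun_prop, fun c u hc => ?_,
      fun u => le_min (nonneg u) (norm_nonneg _), ?_, fun b hb => lt_min (pos b hb) ?_⟩
    · have : ‖a‖ • c • u - ‖c • u‖ • a = c • (‖a‖ • u - ‖u‖ • a) := by
        rw [norm_smul, Real.norm_of_nonneg hc]
        module
      dsimp only
      rw [this, smul c u hc, norm_smul, Real.norm_of_nonneg hc, mul_min_of_nonneg _ _ hc]
    · rintro a' (rfl | ha')
      · simp [nonneg]
      · simp [zero a' ha']
    · rw [norm_sub_pos_iff]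
      exact fun h => hst a (mem_insert a s) b hb (sameRay_iff_norm_smul_eq.2 h)

theorem SeparatingGauge.exists_of_not_sameRay {s t : Set ℂ} (hs : s.Finite) (ht : t.Finite)
    (zero_notMem : 0 ∉ t) (hst : ∀ a ∈ s, ∀ b ∈ t, ¬ SameRay ℝ a b) :
    Nonempty (SeparatingGauge s t) := by
  obtain ⟨N, cont, smul, nonneg, zero, pos⟩ := exists_homogeneous_separating hs zero_notMem hst
  obtain ⟨P, P_pos, norm_le⟩ := (hs.image norm).bddAbove.exists_ge 1
  obtain ⟨Q, Q_pos, inv_le⟩ := (ht.image fun b => (N b)⁻¹).bddAbove.exists_ge 1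
  refine ⟨⟨fun u => ‖u‖ / (2 * P) + 3 * Q * N u, by fun_prop, fun c u hc => ?_, fun u hu => ?_,
    fun a ha => ?_, fun b hb => ?_⟩⟩
  · rw [← Complex.real_smul, smul c u hc, norm_smul, Real.norm_of_nonneg hc]
    ring
  · have := nonneg u
    have := norm_pos_iff.2 hu
    positivity
  · have : ‖a‖ ≤ P := norm_le _ (mem_image_of_mem _ ha)
    rw [zero a ha, mul_zero, add_zero, div_lt_one (by linarith)]
    linarith
  · have : 1 ≤ Q * N b := (inv_le_iff_one_le_mul₀ (pos b hb)).1 (inv_le _ (mem_image_of_mem _ hb))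
    have : 0 ≤ ‖b‖ / (2 * P) := by positivity
    linarith

end Gauges

/-! ### Connectedness of the covers by arguments -/

section Monodromy

theorem addSubgroup_eq_top_of_gcd_eq_one {ι : Type*} {s : Finset ι} {ε : ι → ℕ}
    (hε : s.gcd ε = 1) {Γ : AddSubgroup ℤ} (h : ∀ i ∈ s, (ε i : ℤ) ∈ Γ) : Γ = ⊤ := by
  obtain ⟨d, rfl⟩ := Int.subgroup_cyclic Γ
  have dvd : d.natAbs ∣ 1 := by
    rw [← hε]
    refine Finset.dvd_gcd fun i hi => ?_
    rw [← Int.natCast_dvd_natCast, Int.natAbs_dvd]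
    exact Int.mem_zmultiples_iff.1 (by simpa [AddSubgroup.zmultiples_eq_closure] using h i hi)
  rw [← AddSubgroup.zmultiples_eq_closure, eq_top_iff]
  intro N _
  exact Int.mem_zmultiples_iff.2 (Int.natAbs_dvd_natAbs.1 (by simp [Nat.dvd_one.1 dvd]))

namespace ArgSpace

variable {X : Type*} {k : X → ℂ}

/-- The deck transformation adding `N` full turns to the argument. -/
noncomputable def shift (q : ArgSpace k) (N : ℤ) : ArgSpace k :=
  ⟨(q.1.1, q.1.2 + 2 * Real.pi * N), q.2.add_two_pi_mul N⟩

theorem shift_zero (q : ArgSpace k) : q.shift 0 = q := by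
  simp [shift]

theorem shift_shift (q : ArgSpace k) (M N : ℤ) : (q.shift M).shift N = q.shift (M + N) := by
  refine Subtype.ext (Prod.ext rfl ?_)
  simp only [shift, Int.cast_add]
  ring

theorem exists_eq_shift {p q : ArgSpace k} (h : p.1.1 = q.1.1) : ∃ N, q = p.shift N := by
  obtain ⟨⟨x, θ⟩, hθ⟩ := p
  obtain ⟨⟨y, φ⟩, hφ⟩ := q
  obtain rfl : x = y := h
  obtain ⟨N, rfl⟩ := hθ.exists_eq_add hφ
  exact ⟨N, rfl⟩

variable [TopologicalSpace X]

theorem joined_shift {p q : ArgSpace k} (h : Joined p q) (N : ℤ) :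
    Joined (p.shift N) (q.shift N) :=
  h.map (f := fun p => p.shift N) (Continuous.subtype_mk (by fun_prop) _)

theorem exists_joined_of_joinedIn (hk : Continuous k) (p : ArgSpace k) {x : X}
    (h : JoinedIn {z | k z ≠ 0} p.1.1 x) : ∃ q : ArgSpace k, q.1.1 = x ∧ Joined p q := by
  obtain ⟨γ, hγ⟩ := h
  let w₀ : ℂ := Real.log ‖k p.1.1‖ + p.1.2 * Complex.I
  have exp_w₀ : Complex.exp w₀ = k p.1.1 := by
    rw [Complex.exp_add, ← Complex.ofReal_exp, Real.exp_log (norm_pos_iff.2 p.2.1),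
      p.2.norm_mul_exp]
  obtain ⟨w, exp_w, w_zero, -⟩ := exists_homotopy_lift (T := Unit) Complex.isCoveringMapOn_exp
    (H := ⟨fun q => k (γ q.1), by fun_prop⟩) (fun q => hγ q.1) (f := .const Unit w₀)
    (fun _ => by simp [exp_w₀])
  have isArg (t : I) : IsArg (k (γ t)) (w (t, ())).im := by
    have := (isArg_exp (w (t, ())).im).ofReal_mul (Real.exp_pos (w (t, ())).re)
    rwa [Complex.ofReal_exp, ← Complex.exp_add, Complex.re_add_im, exp_w] at this
  refine ⟨⟨(γ 1, _), isArg 1⟩, γ.target, ?_⟩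
  convert joined_of_continuous (f := fun t => (⟨(γ t, (w (t, ())).im), isArg t⟩ : ArgSpace k))
    (Continuous.subtype_mk (by fun_prop) _) using 1
  refine Subtype.ext (Prod.ext γ.source.symm ?_)
  simp [w_zero, w₀]

/-- The numbers of turns of the argument of `k` along loops at `p₀`: the monodromy group of the
cover. -/
def monodromy (p₀ : ArgSpace k) : AddSubgroup ℤ where
  carrier := {N | Joined p₀ (p₀.shift N)}
  zero_mem' := by simp [shift_zero, Joined.refl]
  add_mem' {M N} hM hN := by
    have := joined_shift hM N
    rw [shift_shift] at this
    exact hN.trans this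
  neg_mem' {N} hN := by
    have := joined_shift hN (-N)
    rw [shift_shift, add_neg_cancel, shift_zero] at this
    exact this.symm

theorem mem_monodromy_of_joined (hk : Continuous k) (connected : IsPathConnected {z | k z ≠ 0})
    (p₀ : ArgSpace k) {p : ArgSpace k} {N : ℤ} (h : Joined p (p.shift N)) : N ∈ monodromy p₀ := by
  obtain ⟨q, hq, joined⟩ :=
    p.exists_joined_of_joinedIn hk (connected.joinedIn _ p.2.1 _ p₀.2.1)
  obtain ⟨M, rfl⟩ := exists_eq_shift hq
  have := joined_shift (joined.symm.trans (h.trans (joined_shift joined N))) M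
  rwa [shift_shift, add_comm N, ← shift_shift] at this

theorem pathConnectedSpace_of_monodromy_eq_top (hk : Continuous k)
    (connected : IsPathConnected {z | k z ≠ 0}) {p₀ : ArgSpace k} (h : monodromy p₀ = ⊤) :
    PathConnectedSpace (ArgSpace k) := by
  have joined (p : ArgSpace k) : Joined p p₀ := by
    obtain ⟨q, hq, joined⟩ :=
      p.exists_joined_of_joinedIn hk (connected.joinedIn _ p.2.1 _ p₀.2.1)
    obtain ⟨N, rfl⟩ := exists_eq_shift hq.symm
    have hN : N ∈ monodromy p₀ := h ▸ AddSubgroup.mem_top N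
    exact joined.trans (Joined.symm hN)
  exact ⟨⟨p₀⟩, fun p q => (joined p).trans (joined q).symm⟩

/-- A small circle around a zero of order `ε` makes the argument turn `ε` times. -/
theorem exists_joined_shift {k Q : ℂ → ℂ} {a : ℂ} {ε : ℕ} (hQ : Continuous Q) (hQa : Q a ≠ 0)
    (hk : ∀ x, k x = (x - a) ^ ε * Q x) : ∃ p : ArgSpace k, Joined p (p.shift ε) := by
  obtain ⟨U, hU, haU, β, hβ, -, isArg_β⟩ := exists_continuousOn_isArg hQ (isArg_arg hQa)
  obtain ⟨ρ, hρ, sphere_subset⟩ : ∃ ρ > 0, Metric.sphere a ρ ⊆ U := by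
    obtain ⟨ρ, hρ, ball_subset⟩ := Metric.nhds_basis_closedBall.mem_iff.1 (hU.mem_nhds haU)
    exact ⟨ρ, hρ, Metric.sphere_subset_closedBall.trans ball_subset⟩
  have circle_mem (θ : ℝ) : circleMap a ρ θ ∈ U := sphere_subset (circleMap_mem_sphere a hρ.le θ)
  have isArg (θ : ℝ) : IsArg (k (circleMap a ρ θ)) (ε * θ + β (circleMap a ρ θ)) := by
    rw [hk]
    refine IsArg.mul (IsArg.pow ?_ ε) (isArg_β _ (circle_mem θ))
    simpa [circleMap] using (isArg_exp θ).ofReal_mul hρ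
  have cont : Continuous fun t : I => β (circleMap a ρ (2 * Real.pi * t)) :=
    hβ.comp_continuous ((continuous_circleMap a ρ).comp (by fun_prop)) fun t => circle_mem _
  refine ⟨⟨(_, _), isArg 0⟩, ?_⟩
  convert joined_of_continuous (f := fun t : I => (⟨(_, _), isArg (2 * Real.pi * t)⟩ : ArgSpace k))
    (Continuous.subtype_mk (((continuous_circleMap a ρ).comp (by fun_prop)).prodMk
      (.add (by fun_prop) cont)) _) using 1
  · simp
  · have period : circleMap a ρ (2 * Real.pi) = circleMap a ρ 0 := by
      simpa using periodic_circleMap a ρ 0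
    refine Subtype.ext (Prod.ext (by simp [shift]) ?_)
    simp only [shift, Icc.coe_one, mul_one, mul_zero, zero_add, period, Int.cast_natCast]
    ring

theorem pathConnectedSpace_prod {ι : Type*} [Fintype ι] {α : ι → ℂ} (hα : Function.Injective α)
    {ε : ι → ℕ} (pos : ∀ i, 0 < ε i) (gcd_eq_one : Finset.univ.gcd ε = 1) :
    PathConnectedSpace (ArgSpace fun x : ℂ => ∏ i, (x - α i) ^ ε i) := by
  classical
  have cont : Continuous fun x : ℂ => ∏ i, (x - α i) ^ ε i := by fun_prop
  have ne_zero : {x : ℂ | ∏ i, (x - α i) ^ ε i ≠ 0} = (range α)ᶜ := by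
    ext x
    simp [Finset.prod_eq_zero_iff, sub_eq_zero, (pos _).ne', @eq_comm _ x]
  have connected : IsPathConnected {x : ℂ | ∏ i, (x - α i) ^ ε i ≠ 0} := by
    rw [ne_zero]
    refine (countable_range α).isPathConnected_compl_of_one_lt_rank ?_
    rw [Complex.rank_real_complex]
    exact Cardinal.one_lt_two
  obtain ⟨x₀, hx₀⟩ := connected.nonempty
  refine pathConnectedSpace_of_monodromy_eq_top cont connected (p₀ := ⟨(x₀, _), isArg_arg hx₀⟩)
    (addSubgroup_eq_top_of_gcd_eq_one gcd_eq_one fun i _ => ?_)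
  have cofactor_ne_zero : ∏ j ∈ Finset.univ.erase i, (α i - α j) ^ ε j ≠ 0 :=
    Finset.prod_ne_zero_iff.2 fun j hj =>
      pow_ne_zero _ (sub_ne_zero.2 (hα.ne (Finset.ne_of_mem_erase hj).symm))
  obtain ⟨p, hp⟩ := exists_joined_shift (k := fun x => ∏ i, (x - α i) ^ ε i)
    (Q := fun x => ∏ j ∈ Finset.univ.erase i, (x - α j) ^ ε j) (by fun_prop) cofactor_ne_zero
    fun x => (Finset.mul_prod_erase _ (fun j => (x - α j) ^ ε j) (Finset.mem_univ i)).symm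
  exact mem_monodromy_of_joined cont connected _ hp

end ArgSpace

end Monodromy

/-! ### Twisting the target plane -/

section Twist

theorem mul_exp_norm_cancel (c : ℝ) (u : ℂ) :
    u * Complex.exp ((c * ‖u‖ : ℝ) * Complex.I) * Complex.exp ((-c *
      ‖u * Complex.exp ((c * ‖u‖ : ℝ) * Complex.I)‖ : ℝ) * Complex.I) = u := by
  rw [norm_mul, Complex.norm_exp_ofReal_mul_I, mul_one, mul_assoc, ← Complex.exp_add, ← add_mul,
    ← Complex.ofReal_add]
  simp

/-- The homeomorphism of the plane which rotates the circle of radius `r` by the angle `c * r`. -/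
noncomputable def twist (c : ℝ) : ℂ ≃ₜ ℂ where
  toFun u := u * Complex.exp ((c * ‖u‖ : ℝ) * Complex.I)
  invFun u := u * Complex.exp ((-c * ‖u‖ : ℝ) * Complex.I)
  left_inv := mul_exp_norm_cancel c
  right_inv u := by simpa only [neg_neg] using mul_exp_norm_cancel (-c) u
  continuous_toFun := by fun_prop
  continuous_invFun := by fun_prop

theorem twist_zero (c : ℝ) : twist c 0 = 0 := zero_mul _

theorem IsArg.twist {u : ℂ} {θ : ℝ} (h : IsArg u θ) (c : ℝ) :
    IsArg (twist c u) (θ + c * ‖u‖) :=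
  h.mul (isArg_exp _)

theorem countable_setOf_sameRay_twist {a b : ℂ} (ha : a ≠ 0) (hb : b ≠ 0) (hab : a ≠ b) :
    {c | SameRay ℝ (twist c a) (twist c b)}.Countable := by
  refine (countable_range fun N : ℤ =>
    (b.arg - a.arg + 2 * Real.pi * N) / (‖a‖ - ‖b‖)).mono fun c hc => ?_
  have arg_a := (isArg_arg ha).twist c
  have arg_b := (isArg_arg hb).twist c
  have arg_eq : (twist c a).arg = (twist c b).arg := by
    simpa [arg_a.1, arg_b.1] using Complex.sameRay_iff.1 hc
  obtain ⟨N, hN⟩ := arg_b.exists_eq_add ⟨arg_b.1, arg_a.2.trans (congrArg _ arg_eq)⟩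
  have norm_ne : ‖a‖ ≠ ‖b‖ := fun norm_eq => by
    rw [norm_eq] at hN
    have arg_b : IsArg b a.arg := by
      simpa [show a.arg = b.arg + 2 * Real.pi * N by linarith] using
        (isArg_arg hb).add_two_pi_mul N
    exact hab ((isArg_arg ha).norm_mul_exp.symm.trans (norm_eq ▸ arg_b.norm_mul_exp))
  refine ⟨N, (div_eq_iff (sub_ne_zero.2 norm_ne)).2 ?_⟩
  linarith

theorem exists_not_sameRay_twist {s t : Set ℂ} (hs : s.Countable) (ht : t.Countable) (hs₀ : 0 ∉ s)
    (ht₀ : 0 ∉ t) (hst : Disjoint s t) :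
    ∃ c, ∀ a ∈ s, ∀ b ∈ t, ¬ SameRay ℝ (twist c a) (twist c b) := by
  have countable : (⋃ a ∈ s, ⋃ b ∈ t, {c | SameRay ℝ (twist c a) (twist c b)}).Countable :=
    hs.biUnion fun a ha => ht.biUnion fun b hb =>
      countable_setOf_sameRay_twist (ne_of_mem_of_not_mem ha hs₀) (ne_of_mem_of_not_mem hb ht₀)
        (hst.ne_of_mem ha hb)
  obtain ⟨c, hc⟩ := (countable.dense_compl ℝ).nonempty
  exact ⟨c, by simpa using hc⟩

theorem ArgSpace.pathConnectedSpace_mul_exp {X : Type*} [TopologicalSpace X] {k : X → ℂ}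
    [PathConnectedSpace (ArgSpace k)] {φ : X → ℝ} (hφ : Continuous φ) :
    PathConnectedSpace (ArgSpace fun x => k x * Complex.exp (φ x * Complex.I)) := by
  let rotate (q : ArgSpace k) : ArgSpace fun x => k x * Complex.exp (φ x * Complex.I) :=
    ⟨(q.1.1, q.1.2 + φ q.1.1), q.2.mul (isArg_exp _)⟩
  have cont : Continuous rotate := Continuous.subtype_mk (by fun_prop) _
  refine Function.Surjective.pathConnectedSpace (f := rotate) (fun q => ?_) cont
  have := q.2.mul (isArg_exp (-φ q.1.1))
  rw [mul_assoc, ← Complex.exp_add, ← add_mul, ← Complex.ofReal_add] at this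
  exact ⟨⟨(q.1.1, q.1.2 + -φ q.1.1), by simpa using this⟩,
    Subtype.ext (Prod.ext rfl (neg_add_cancel_right _ _))⟩

namespace BranchedPower

variable {n m : ℕ}

/-- The branched power `A` followed by the twist of the plane. -/
noncomputable def twist (A : BranchedPower n) (c : ℝ) : BranchedPower n where
  toFun x := CurveComplement.twist c (A x)
  root x := A.root x * Complex.exp ((c * ‖A x‖ / n : ℝ) * Complex.I)
  critValues := CurveComplement.twist c '' A.critValues
  pos := A.pos
  continuous_root := by have := A.continuous_root; fun_prop
  apply_eq x := by
    have : (n : ℝ) ≠ 0 := by exact_mod_cast A.pos.ne'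
    rw [mul_pow, ← A.apply_eq, ← Complex.exp_nat_mul, ← mul_assoc, ← Complex.ofReal_natCast,
      ← Complex.ofReal_mul, mul_div_cancel₀ _ this]
    rfl
  finite_critValues := A.finite_critValues.image _
  zero_notMem := by
    rw [← twist_zero c, (CurveComplement.twist c).injective.mem_set_image]
    exact A.zero_notMem
  isCoveringMapOn := by
    refine (A.isCoveringMapOn.homeomorph_comp (CurveComplement.twist c)).mono (Eq.subset ?_)
    rw [← Homeomorph.image_eq_preimage_symm, image_compl_eq (CurveComplement.twist c).bijective,
      image_union, image_singleton, twist_zero]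
  surjective := (CurveComplement.twist c).surjective.comp A.surjective
  isOpenMap := (CurveComplement.twist c).isOpenMap.comp A.isOpenMap
  pathConnectedSpace :=
    have := A.pathConnectedSpace
    ArgSpace.pathConnectedSpace_mul_exp (by fun_prop)

theorem fundamentalGroup_mulEquiv {A : BranchedPower n} {B : BranchedPower m}
    (h : Disjoint A.critValues B.critValues) (w : CurveCompl A B) :
    Nonempty (FundamentalGroup (CurveCompl A B) w ≃* PresentedGroup (relators m n)) := by
  obtain ⟨c, hc⟩ := exists_not_sameRay_twist A.finite_critValues.countable
    B.finite_critValues.countable A.zero_notMem B.zero_notMem h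
  have not_sameRay : ∀ a ∈ (A.twist c).critValues, ∀ b ∈ (B.twist c).critValues,
      ¬ SameRay ℝ a b := by
    rintro _ ⟨a, ha, rfl⟩ _ ⟨b, hb, rfl⟩
    exact hc a ha b hb
  obtain ⟨N⟩ := SeparatingGauge.exists_of_not_sameRay (A.twist c).finite_critValues
    (B.twist c).finite_critValues (B.twist c).zero_notMem not_sameRay
  obtain ⟨N'⟩ := SeparatingGauge.exists_of_not_sameRay (B.twist c).finite_critValues
    (A.twist c).finite_critValues (A.twist c).zero_notMem
    fun b hb a ha h => not_sameRay a ha b hb h.symm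
  have transport (S : Set (ℂ × ℂ)) (hS : S = {q | A.twist c q.1 ≠ B.twist c q.2}) (w : S) :
      Nonempty (FundamentalGroup S w ≃* PresentedGroup (relators m n)) := by
    subst hS
    exact (isTwoSheetedCover_sheets N N').fundamentalGroup_mulEquiv w
  exact transport {q | A q.1 ≠ B q.2}
    (Set.ext fun q => (CurveComplement.twist c).injective.ne_iff.symm) w

end BranchedPower

end Twist

section Polynomial

open Polynomial

theorem isOpenMap_polynomial_eval {P : ℂ[X]} (hP : P.natDegree ≠ 0) : IsOpenMap P.eval := by
  refine (AnalyticOnNhd.is_constant_or_isOpenMap fun x _ =>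
    P.differentiable.analyticAt x).resolve_left ?_
  rintro ⟨w, hw⟩
  obtain ⟨x, hx⟩ := IsAlgClosed.eval_surjective hP (w + 1)
  simp [hw x] at hx

theorem finite_setOf_deriv_eval_eq_zero {P : ℂ[X]} (hP : P.natDegree ≠ 0) :
    {x | deriv P.eval x = 0}.Finite := by
  have : P.derivative ≠ 0 := fun h => hP (derivative_eq_zero.1 h)
  refine P.derivative.roots.toFinset.finite_toSet.subset fun x hx => ?_
  simpa [this] using hx

namespace BranchedPower

/-- A polynomial as a branched cover, with all its nonzero critical values. -/
noncomputable def ofPolynomial {n : ℕ} (hn : 0 < n) {P : ℂ[X]} (hP : P.natDegree ≠ 0) {k : ℂ → ℂ}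
    (hk : Continuous k) (eval_eq : ∀ x, P.eval x = k x ^ n)
    (connected : PathConnectedSpace (ArgSpace k)) : BranchedPower n where
  toFun := P.eval
  root := k
  critValues := P.eval '' {x | deriv P.eval x = 0} \ {0}
  pos := hn
  continuous_root := hk
  apply_eq := eval_eq
  finite_critValues := ((finite_setOf_deriv_eval_eq_zero hP).image _).sdiff
  zero_notMem h := h.2 rfl
  isCoveringMapOn := P.isCoveringMapOn_eval.mono fun c hc h => hc <| by
    rw [sdiff_union_self]
    simpa using Or.inr h
  surjective := IsAlgClosed.eval_surjective hP
  isOpenMap := isOpenMap_polynomial_eval hP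
  pathConnectedSpace := connected

theorem exists_eq_prod {ι : Type*} [Fintype ι] [Nonempty ι] {α : ι → ℂ}
    (hα : Function.Injective α) {e : ι → ℕ} (he : ∀ i, 0 < e i) :
    ∃ A : BranchedPower (Finset.univ.gcd e), (∀ x, A x = ∏ i, (x - α i) ^ e i) ∧
      A.critValues = A '' {x | deriv A x = 0} \ {0} := by
  set n := Finset.univ.gcd e
  have i₀ := Classical.arbitrary ι
  have dvd (i : ι) : n ∣ e i := Finset.gcd_dvd (Finset.mem_univ i)
  have hn : 0 < n := Nat.pos_of_dvd_of_pos (dvd i₀) (he i₀)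
  let P : ℂ[X] := ∏ i, (X - C (α i)) ^ e i
  have eval_P (x : ℂ) : P.eval x = ∏ i, (x - α i) ^ e i := by simp [P, eval_prod]
  have natDegree_P : P.natDegree ≠ 0 := by
    rw [natDegree_prod _ _ fun i _ => pow_ne_zero _ (X_sub_C_ne_zero _)]
    simp only [natDegree_pow, natDegree_X_sub_C, mul_one]
    exact (Finset.sum_pos (fun i _ => he i) Finset.univ_nonempty).ne'
  have connected : PathConnectedSpace (ArgSpace fun x => ∏ i, (x - α i) ^ (e i / n)) :=
    ArgSpace.pathConnectedSpace_prod hα (fun i => Nat.div_pos (Nat.le_of_dvd (he i) (dvd i)) hn)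
      (Finset.gcd_div_eq_one (Finset.mem_univ i₀) (he i₀).ne')
  refine ⟨ofPolynomial hn natDegree_P (by fun_prop) (fun x => ?_) connected, eval_P, rfl⟩
  rw [eval_P, ← Finset.prod_pow]
  exact Finset.prod_congr rfl fun i _ => by rw [← pow_mul, Nat.div_mul_cancel (dvd i)]

end BranchedPower

end Polynomial

end CurveComplement

open CurveComplement in
theorem stmt_8_general {ι κ : Type*} [Fintype ι] [Nonempty ι] [Fintype κ] [Nonempty κ]
    {α : ι → ℂ} {β : κ → ℂ} (hα : Function.Injective α) (hβ : Function.Injective β)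
    {e : ι → ℕ} {μ : κ → ℕ} (he : ∀ i, 0 < e i) (hμ : ∀ j, 0 < μ j) {g f : ℂ → ℂ}
    (hg : ∀ x, g x = ∏ i, (x - α i) ^ e i) (hf : ∀ y, f y = ∏ j, (y - β j) ^ μ j)
    (hsing : ∀ x y : ℂ, g x = f y → deriv g x = 0 → deriv f y = 0 → g x = 0)
    (p : {q : ℂ × ℂ // g q.1 ≠ f q.2}) :
    Nonempty (FundamentalGroup {q : ℂ × ℂ // g q.1 ≠ f q.2} p ≃*
      PresentedGroup (relators (Finset.univ.gcd μ) (Finset.univ.gcd e))) := by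
  obtain ⟨A, hA, crit_A⟩ := BranchedPower.exists_eq_prod hα he
  obtain ⟨B, hB, crit_B⟩ := BranchedPower.exists_eq_prod hβ hμ
  obtain rfl : g = A := funext fun x => (hg x).trans (hA x).symm
  obtain rfl : f = B := funext fun y => (hf y).trans (hB y).symm
  refine BranchedPower.fundamentalGroup_mulEquiv ?_ p
  rw [crit_A, crit_B, Set.disjoint_left]
  rintro _ ⟨⟨x, hx, rfl⟩, ne_zero⟩ ⟨⟨y, hy, hxy⟩, -⟩
  exact ne_zero (hsing x y hxy.symm hx hy)

/-- Let `g(x) = ∏ (x−αᵢ)^{nᵢ}` and `f(y) = ∏ (y−βⱼ)^{mⱼ}` have the same degree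
`d`, with the `αᵢ` (resp. `βⱼ`) pairwise distinct, and suppose every singular
point of the affine curve `B = {g(x) = f(y)}` lies on `{g = 0}`.  With
`n = gcd(nᵢ)` and `m = gcd(mⱼ)`, the fundamental group of `ℂ² ∖ B` (at any
base point) is isomorphic to the group `G_{m,n}` presented by generators
`g₁, …, g_m` (indexed cyclically by `ZMod m`) and relators
`gₖ⁻¹·(g₁⋯g_n)·g_{k+n}·(g₁⋯g_n)⁻¹`. -/
theorem stmt_8 (r s d : ℕ) (hd : 0 < d)
    (α : Fin r → ℂ) (β : Fin s → ℂ)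
    (hα : Function.Injective α) (hβ : Function.Injective β)
    (e : Fin r → ℕ) (μ : Fin s → ℕ) (he : ∀ i, 0 < e i) (hμ : ∀ j, 0 < μ j)
    (hdg : ∑ i, e i = d) (hdf : ∑ j, μ j = d)
    (g f : ℂ → ℂ)
    (hg : ∀ x, g x = ∏ i, (x - α i) ^ e i)
    (hf : ∀ y, f y = ∏ j, (y - β j) ^ μ j)
    (hsing : ∀ x y : ℂ, g x = f y → deriv g x = 0 → deriv f y = 0 → g x = 0)
    (n m : ℕ) (hn : n = Finset.univ.gcd e) (hm : m = Finset.univ.gcd μ)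
    (rels : Set (FreeGroup (ZMod m)))
    (hrels : rels = {w : FreeGroup (ZMod m) | ∃ kk : ZMod m,
      w = (FreeGroup.of kk)⁻¹ *
          (((List.range n).map (fun i => FreeGroup.of ((i + 1 : ℕ) : ZMod m))).prod) *
          FreeGroup.of (kk + (n : ZMod m)) *
          (((List.range n).map (fun i => FreeGroup.of ((i + 1 : ℕ) : ZMod m))).prod)⁻¹})
    (p : {q : ℂ × ℂ // g q.1 ≠ f q.2}) :
    Nonempty (FundamentalGroup {q : ℂ × ℂ // g q.1 ≠ f q.2} p ≃* PresentedGroup rels) := by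
  subst hn hm hrels
  have : Nonempty (Fin r) :=
    Finset.univ_nonempty_iff.1 (Finset.nonempty_of_sum_ne_zero (hdg ▸ hd.ne'))
  have : Nonempty (Fin s) :=
    Finset.univ_nonempty_iff.1 (Finset.nonempty_of_sum_ne_zero (hdf ▸ hd.ne'))
  exact stmt_8_general hα hβ he hμ hg hf hsing p
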